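/- arXiv:2407.05095 — 3 statements merged into one kernel-verified Lean document; each statement's English description precedes it below -/
import Mathlib

section
/- Let ϖ ⊂ Ω_{C°} be a nonempty compact set and let K_j ∈ K(C,ϖ) for j ∈ ℕ₀. If K_j → K₀ as j → ∞ (in the sense of convergence of C-pseudo-cones), then the Θ-weighted surface area measures converge weakly: S_{n−1}^Θ(K_j,·) → S_{n−1}^Θ(K₀,·). -/
open MeasureTheory Set Filter
open scoped RealInnerProductSpace ENNReal Topology Pointwise NNReal

noncomputable section

abbrev En (n : ℕ) := EuclideanSpace ℝ (Fin n)

/-- `C` is a pointed closed convex cone with nonempty interior. -/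
def IsGoodCone (n : ℕ) (C : Set (En n)) : Prop :=
  IsClosed C ∧ Convex ℝ C ∧ (∀ x ∈ C, ∀ r : ℝ, 0 ≤ r → r • x ∈ C) ∧
    C ∩ (-C) = {0} ∧ (interior C).Nonempty

/-- The dual cone `C° = {x : ⟨x,y⟩ ≤ 0 ∀ y ∈ C}`. -/
def dualCone (n : ℕ) (C : Set (En n)) : Set (En n) := {x | ∀ y ∈ C, ⟪x, y⟫ ≤ 0}

/-- `Ω_C = S^{n-1} ∩ int C`. -/
def omegaC (n : ℕ) (C : Set (En n)) : Set (En n) := Metric.sphere 0 1 ∩ interior C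

/-- `Ω_{C°} = S^{n-1} ∩ int C°`. -/
def omegaDual (n : ℕ) (C : Set (En n)) : Set (En n) :=
  Metric.sphere 0 1 ∩ interior (dualCone n C)

/-- A pseudo-cone: nonempty closed convex set not containing `0` with `λK ⊆ K` for `λ ≥ 1`. -/
def IsPseudoCone (n : ℕ) (K : Set (En n)) : Prop :=
  K.Nonempty ∧ IsClosed K ∧ Convex ℝ K ∧ (0 : En n) ∉ K ∧ ∀ l : ℝ, 1 ≤ l → l • K ⊆ K

/-- The recession cone of `K`. -/
def recCone (n : ℕ) (K : Set (En n)) : Set (En n) :=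
  {z | ∀ x ∈ K, ∀ t : ℝ, 0 ≤ t → x + t • z ∈ K}

/-- A `C`-pseudo-cone: a pseudo-cone with recession cone `C`. -/
def IsCPseudoCone (n : ℕ) (C K : Set (En n)) : Prop := IsPseudoCone n K ∧ recCone n K = C

/-- The set of outer unit normal vectors of `K` at `x`. -/
def normalsAt (n : ℕ) (K : Set (En n)) (x : En n) : Set (En n) :=
  {u | ‖u‖ = 1 ∧ ∀ y ∈ K, ⟪y, u⟫ ≤ ⟪x, u⟫}

/-- `ν_K^{-1}(ω)`: the boundary points of `K` whose outer unit normal is unique and lies in `ω`. -/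
def nuInv (n : ℕ) (K ω : Set (En n)) : Set (En n) :=
  {x | x ∈ frontier K ∧ ∃ u ∈ ω, normalsAt n K x = {u}}

open Classical in
/-- The outer unit normal map `ν_K` (junk value `0` where the normal is not unique). -/
def nuMap (n : ℕ) (K : Set (En n)) (x : En n) : En n :=
  if h : ∃ u, normalsAt n K x = {u} then h.choose else 0

/-- `Δ(ω)`: the spherical (angular) distance of `ω` from the boundary of `Ω_{C°}`
(the relative boundary of `Ω_{C°}` in the unit sphere is `closure Ω_{C°} \ Ω_{C°}`,
since `Ω_{C°}` is relatively open in the sphere). -/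
def sphereAngleDist (n : ℕ) (C ω : Set (En n)) : ℝ :=
  sInf {d | ∃ u ∈ ω, ∃ v ∈ closure (omegaDual n C) \ omegaDual n C,
    d = InnerProductGeometry.angle u v}

/-- `b(K)`: the distance of `K` from the origin. -/
def distOrigin (n : ℕ) (K : Set (En n)) : ℝ := Metric.infDist 0 K

/-- `C^-(t) = C ∩ H^-(𝔳, t)`. -/
def Cminus (n : ℕ) (C : Set (En n)) (v : En n) (t : ℝ) : Set (En n) :=
  C ∩ {x | ⟪x, v⟫ ≤ t}

/-- The support function `h_K(u) = sup{⟨y,u⟩ : y ∈ K}`. -/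
def suppFn (n : ℕ) (K : Set (En n)) (u : En n) : ℝ := sSup ((fun y => ⟪y, u⟫) '' K)

/-- `Θ : C∖{0} → (0,∞)` continuous and homogeneous of degree `-q`. -/
def IsThetaWeight (n : ℕ) (C : Set (En n)) (q : ℝ) (Θ : En n → ℝ) : Prop :=
  ContinuousOn Θ (C \ {0}) ∧ (∀ y ∈ C \ {0}, 0 < Θ y) ∧
    ∀ y ∈ C \ {0}, ∀ r : ℝ, 0 < r → Θ (r • y) = r ^ (-q) * Θ y

/-- The `Θ`-weighted `n`-dimensional Hausdorff (Lebesgue) measure `H_Θ^n`. -/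
def HTheta (n : ℕ) (Θ : En n → ℝ) : Measure (En n) :=
  volume.withDensity fun y => ENNReal.ofReal (Θ y)

/-- The `Θ`-weighted cone-volume measure `V_K^Θ(ω) = H_Θ^n(⋃_{x ∈ ν_K^{-1}(ω)} [0,x])`. -/
def coneVol (n : ℕ) (Θ : En n → ℝ) (K ω : Set (En n)) : ℝ≥0∞ :=
  HTheta n Θ (⋃ x ∈ nuInv n K ω, segment ℝ (0 : En n) x)

/-- The (unweighted) cone-volume measure `V_K(ω) = H^n(⋃_{x ∈ ν_K^{-1}(ω)} [0,x])`. -/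
def coneVolU (n : ℕ) (K ω : Set (En n)) : ℝ≥0∞ :=
  volume (⋃ x ∈ nuInv n K ω, segment ℝ (0 : En n) x)

/-- The `Θ`-weighted surface area measure `S_{n-1}^Θ(K,ω) = ∫_{ν_K^{-1}(ω)} Θ dH^{n-1}`. -/
def surfTheta (n : ℕ) (Θ : En n → ℝ) (K ω : Set (En n)) : ℝ≥0∞ :=
  ∫⁻ x in nuInv n K ω, ENNReal.ofReal (Θ x) ∂(μH[(n : ℝ) - 1])

/-- `K ∈ K(C,ϖ)`: `K` is a `C`-pseudo-cone that is `C`-determined by `ϖ`. -/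
def CDetermined (n : ℕ) (C ϖ K : Set (En n)) : Prop :=
  IsCPseudoCone n C K ∧ K = C ∩ ⋂ u ∈ ϖ, {x | ⟪x, u⟫ ≤ suppFn n K u}

/-- The Wulff shape `[g] = C ∩ ⋂_{u ∈ ϖ} {y : ⟨y,u⟩ ≤ -g(u)}`. -/
def wulff (n : ℕ) (C ϖ : Set (En n)) (g : En n → ℝ) : Set (En n) :=
  C ∩ ⋂ u ∈ ϖ, {y | ⟪y, u⟫ ≤ -g u}

/-- The `Θ`-weighted covolume `V_Θ(K) = ∫_{C∖K} Θ dH^n`. -/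
def covol (n : ℕ) (Θ : En n → ℝ) (C K : Set (En n)) : ℝ≥0∞ := HTheta n Θ (C \ K)

/-- The radial function `ρ_K(v) = min{λ : λv ∈ K}`. -/
def rho (n : ℕ) (K : Set (En n)) (v : En n) : ℝ := sInf {t : ℝ | t • v ∈ K}

/-- The radial map `r_K(v) = ρ_K(v) v`. -/
def radMap (n : ℕ) (K : Set (En n)) (v : En n) : En n := rho n K v • v

/-- `α_K^{-1}(ω)`: directions `v ∈ Ω_C` with `r_K(v) ∈ ∂'K` (boundary point in `int C` with
unique outer normal) whose unique outer normal lies in `ω`. -/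
def alphaInv (n : ℕ) (C K ω : Set (En n)) : Set (En n) :=
  {v ∈ omegaC n C | radMap n K v ∈ frontier K ∧ radMap n K v ∈ interior C ∧
    ∃ u ∈ ω, normalsAt n K (radMap n K v) = {u}}

/-- `μ` is the Borel measure on `Ω_{C°}` representing the `Θ`-weighted cone-volume
measure of `K` (extended by `0` outside `Ω_{C°}`). -/
def RepsConeVol (n : ℕ) (C : Set (En n)) (Θ : En n → ℝ) (K : Set (En n))
    (μ : Measure (En n)) : Prop :=
  μ (omegaDual n C)ᶜ = 0 ∧
    ∀ ω, MeasurableSet ω → ω ⊆ omegaDual n C → μ ω = coneVol n Θ K ω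

/-- `μ` is the Borel measure on `Ω_{C°}` representing the `Θ`-weighted surface area
measure of `K` (extended by `0` outside `Ω_{C°}`). -/
def RepsSurf (n : ℕ) (C : Set (En n)) (Θ : En n → ℝ) (K : Set (En n))
    (μ : Measure (En n)) : Prop :=
  μ (omegaDual n C)ᶜ = 0 ∧
    ∀ ω, MeasurableSet ω → ω ⊆ omegaDual n C → μ ω = surfTheta n Θ K ω


/-- The hyperplane orthogonal to `v`. -/
abbrev Vp (n : ℕ) (v : En n) : Submodule ℝ (En n) := (ℝ ∙ v)ᗮ

lemma Vp_inner {n : ℕ} {v : En n} (y : Vp n v) : ⟪(y : En n), v⟫ = 0 := by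
  have := Submodule.mem_orthogonal_singleton_iff_inner_left.1 y.2
  exact this

lemma Vp_decomp {n : ℕ} {v : En n} (hv : ‖v‖ = 1) (x : En n) :
    ∃ y : Vp n v, x = y + ⟪x, v⟫ • v := by
  refine ⟨⟨x - ⟪x, v⟫ • v, ?_⟩, ?_⟩
  · rw [Submodule.mem_orthogonal_singleton_iff_inner_left, inner_sub_left, inner_smul_left]
    simp [hv]
  · simp

lemma Vp_inner_add {n : ℕ} {v : En n} (hv : ‖v‖ = 1) (y : Vp n v) (t : ℝ) :
    ⟪(y : En n) + t • v, v⟫ = t := by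
  rw [inner_add_left, inner_smul_left, Vp_inner]
  simp [hv]

lemma Vp_norm_le {n : ℕ} {v : En n} (y : Vp n v) (t : ℝ) :
    ‖y‖ ≤ ‖(y : En n) + t • v‖ := by
  have h : ‖(y : En n) + t • v‖ * ‖(y : En n) + t • v‖ =
      ‖(y : En n)‖ * ‖(y : En n)‖ + ‖t • v‖ * ‖t • v‖ := by
    apply norm_add_sq_eq_norm_sq_add_norm_sq_real
    rw [inner_smul_right, Vp_inner, mul_zero]
  have h2 : ‖y‖ = ‖(y : En n)‖ := rfl
  rw [h2]
  nlinarith [norm_nonneg ((y : En n) + t • v), norm_nonneg (y : En n),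
    mul_self_nonneg ‖t • v‖]

lemma Vp_abs_le {n : ℕ} {v : En n} (hv : ‖v‖ = 1) (y : Vp n v) (t : ℝ) :
    |t| ≤ ‖(y : En n) + t • v‖ := by
  have := abs_real_inner_le_norm ((y : En n) + t • v) v
  rw [Vp_inner_add hv, hv, mul_one] at this
  exact this

lemma dual_unif {n : ℕ} {C s : Set (En n)} (hs : IsCompact s)
    (hsub : s ⊆ interior (dualCone n C)) :
    ∃ c > 0, ∀ u ∈ s, ∀ x ∈ C, ⟪x, u⟫ ≤ -c * ‖x‖ := by
  obtain ⟨δ, hδ, hsubδ⟩ := hs.exists_cthickening_subset_open isOpen_interior hsub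
  refine ⟨δ, hδ, fun u hu x hx => ?_⟩
  by_cases hx0 : x = 0
  · simp [hx0]
  have hxn : 0 < ‖x‖ := norm_pos_iff.2 hx0
  have hmem : u + (δ / ‖x‖) • x ∈ dualCone n C := by
    apply interior_subset
    apply hsubδ
    apply Metric.mem_cthickening_of_dist_le _ u _ _ hu
    rw [dist_eq_norm]
    simp only [add_sub_cancel_left, norm_smul, norm_div, Real.norm_eq_abs, abs_of_pos hδ]
    rw [abs_of_pos hxn, div_mul_cancel₀ _ hxn.ne']
  have := hmem x hx
  rw [inner_add_left, inner_smul_left, real_inner_self_eq_norm_sq, real_inner_comm] at this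
  simp only [conj_trivial] at this
  have h2 : δ / ‖x‖ * ‖x‖ ^ 2 = δ * ‖x‖ := by field_simp
  linarith

/-- `g` is the function whose epigraph (in direction `v`) is `K`. -/
def IsGraphFn (n : ℕ) (v : En n) (K : Set (En n)) (g : Vp n v → ℝ) : Prop :=
  ∀ (y : Vp n v) (t : ℝ), (y : En n) + t • v ∈ K ↔ g y ≤ t

lemma exists_graph {n : ℕ} {C : Set (En n)} (hC : IsGoodCone n C) {v : En n} (hv1 : ‖v‖ = 1)
    (hv2 : v ∈ interior C) (hv3 : -v ∈ interior (dualCone n C)) :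
    ∃ L : ℝ≥0, ∀ ϖ K, CDetermined n C ϖ K →
      ∃ g : Vp n v → ℝ, IsGraphFn n v K g ∧ LipschitzWith L g ∧ ConvexOn ℝ univ g := by
  obtain ⟨hCcl, hCconv, hCcone, -, -⟩ := hC
  obtain ⟨δ, hδ, hball⟩ := Metric.isOpen_iff.1 isOpen_interior v hv2
  -- cone contains `t v + z` when `‖z‖ ≤ t δ / 2`
  have hcone : ∀ (t : ℝ) (z : En n), 2 / δ * ‖z‖ ≤ t → z + t • v ∈ C := by
    intro t z hz
    have h0 : 0 ≤ 2 / δ * ‖z‖ := by positivity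
    rcases (h0.trans hz).eq_or_lt with h | h
    · have : ‖z‖ ≤ 0 := by
        by_contra hcon
        push Not at hcon
        have : 0 < 2 / δ * ‖z‖ := by positivity
        linarith
      have hz0 : z = 0 := norm_le_zero_iff.1 this
      rw [← h, hz0]
      have := hCcone v (interior_subset hv2) 0 le_rfl
      simpa using this
    · have hm : v + t⁻¹ • z ∈ C := by
        apply interior_subset
        apply hball
        rw [Metric.mem_ball, dist_eq_norm, add_sub_cancel_left, norm_smul, norm_inv,
          Real.norm_eq_abs, abs_of_pos h]
        rw [inv_mul_lt_iff₀ h]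
        have : ‖z‖ ≤ t * δ / 2 := by
          have := mul_le_mul_of_nonneg_right hz hδ.le
          field_simp at this
          linarith
        nlinarith
      have := hCcone _ hm t h.le
      rw [smul_add, smul_smul, mul_inv_cancel₀ h.ne', one_smul, add_comm] at this
      exact this
  have hvC : ∀ x ∈ C, 0 ≤ ⟪x, v⟫ := by
    intro x hx
    have := (interior_subset hv3) x hx
    rw [inner_neg_left, real_inner_comm] at this
    linarith
  refine ⟨Real.toNNReal (2 / δ), fun ϖ K hK => ?_⟩
  obtain ⟨⟨⟨hne, hcl, hconv, h0, -⟩, hrec⟩, hdet⟩ := hK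
  have hadd : ∀ x ∈ K, ∀ z ∈ C, x + z ∈ K := by
    intro x hx z hz
    rw [← hrec] at hz
    simpa using hz x hx 1 zero_le_one
  have hKC : K ⊆ C := by
    rw [hdet]; exact inter_subset_left
  let S : Vp n v → Set ℝ := fun y => {t | (y : En n) + t • v ∈ K}
  have hSne : ∀ y, (S y).Nonempty := by
    intro y
    obtain ⟨x, hx⟩ := hne
    refine ⟨2 / δ * ‖(y : En n) - x‖, ?_⟩
    have := hadd x hx _ (hcone _ ((y : En n) - x) le_rfl)
    change _ ∈ K
    convert this using 1
    abel
  have hSbd : ∀ y, BddBelow (S y) := by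
    intro y
    refine ⟨0, fun t ht => ?_⟩
    have := hvC _ (hKC ht)
    rwa [Vp_inner_add hv1] at this
  have hScl : ∀ y, IsClosed (S y) := by
    intro y
    exact hcl.preimage (by fun_prop : Continuous fun t : ℝ => (y : En n) + t • v)
  let g : Vp n v → ℝ := fun y => sInf (S y)
  have hmem : ∀ y : Vp n v, (y : En n) + g y • v ∈ K := fun y => (hScl y).csInf_mem (hSne y) (hSbd y)
  have hg : IsGraphFn n v K g := by
    intro y t
    constructor
    · intro h
      exact csInf_le (hSbd y) h
    · intro h
      have := hadd _ (hmem y) ((t - g y) • v) (hCcone v (interior_subset hv2) _ (by linarith))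
      convert this using 1
      module
  refine ⟨g, hg, ?_, ?_⟩
  · apply LipschitzWith.of_le_add_mul
    intro x y
    rw [← hg]
    have := hadd _ (hmem y) _ (hcone _ ((x : En n) - y) le_rfl)
    convert this using 1
    simp only [dist_eq_norm]
    rw [Real.coe_toNNReal _ (by positivity)]
    rw [← Submodule.coe_sub, Submodule.coe_norm]
    push_cast
    module
  · refine ⟨convex_univ, fun x _ y _ a b ha hb hab => ?_⟩
    rw [← hg]
    have := hconv (hmem x) (hmem y) ha hb hab
    convert this using 1
    push_cast
    simp only [smul_eq_mul]
    module

lemma graph_frontier {n : ℕ} {v : En n} (hv1 : ‖v‖ = 1) {K : Set (En n)} (hcl : IsClosed K)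
    {g : Vp n v → ℝ} (hg : IsGraphFn n v K g) (hc : Continuous g) :
    frontier K = range fun y : Vp n v => (y : En n) + g y • v := by
  have hint : ∀ (y : Vp n v) (t : ℝ), (y : En n) + t • v ∈ interior K ↔ g y < t := by
    intro y t
    constructor
    · intro h
      have hcont : Continuous fun s : ℝ => (y : En n) + s • v := by fun_prop
      have := (isOpen_interior.preimage hcont).mem_nhds (show t ∈ _ from h)
      obtain ⟨ε, hε, hb⟩ := Metric.mem_nhds_iff.1 this
      have h1 : t - ε / 2 ∈ Metric.ball t ε := by
        rw [Metric.mem_ball, Real.dist_eq, abs_lt]; constructor <;> linarith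
      have h2 := (hg y _).1 (interior_subset (hb h1))
      linarith
    · intro h
      let P : En n → Vp n v := fun x => ⟨x - ⟪x, v⟫ • v, by
        rw [Submodule.mem_orthogonal_singleton_iff_inner_left, inner_sub_left, inner_smul_left]
        simp [hv1]⟩
      have hP : Continuous P := by
        apply Continuous.subtype_mk
        fun_prop
      have hopen : IsOpen {x : En n | g (P x) < ⟪x, v⟫} :=
        isOpen_lt (hc.comp hP) (by fun_prop)
      have hsub : {x : En n | g (P x) < ⟪x, v⟫} ⊆ K := by
        intro x hx
        have := (hg (P x) ⟪x, v⟫).2 (le_of_lt hx)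
        simpa [P] using this
      apply interior_maximal hsub hopen
      have : P (y + t • v) = y := by
        apply Subtype.ext
        simp only [P, Vp_inner_add hv1]
        simp
      simp only [mem_ofPred_eq, this, Vp_inner_add hv1]
      exact h
  ext x
  rw [hcl.frontier_eq]
  obtain ⟨y, hy⟩ := Vp_decomp hv1 x
  generalize ⟪x, v⟫ = t at hy
  subst hy
  rw [Set.mem_sdiff, hg, hint, mem_range]
  constructor
  · rintro ⟨h1, h2⟩
    exact ⟨y, by rw [le_antisymm h1 (not_lt.1 h2)]⟩
  · rintro ⟨z, hz⟩
    have h1 : g z = t := by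
      have := congrArg (fun x => ⟪x, v⟫) hz
      simpa only [Vp_inner_add hv1] using this
    have h2 : z = y := by
      apply Subtype.ext
      rw [h1] at hz
      exact add_right_cancel hz
    subst h2
    rw [h1]
    exact ⟨le_rfl, lt_irrefl _⟩

/-- The normal vector to the graph of a function with derivative `A`. -/
def Nrm (n : ℕ) (v : En n) (A : Vp n v →L[ℝ] ℝ) : En n :=
  (‖(((InnerProductSpace.toDual ℝ (Vp n v)).symm A : Vp n v) : En n) + (-1 : ℝ) • v‖)⁻¹ •
    ((((InnerProductSpace.toDual ℝ (Vp n v)).symm A : Vp n v) : En n) + (-1 : ℝ) • v)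

lemma Nrm_pos {n : ℕ} {v : En n} (hv1 : ‖v‖ = 1) (y : Vp n v) :
    0 < ‖(y : En n) + (-1 : ℝ) • v‖ := by
  have := Vp_abs_le hv1 y (-1)
  simp only [abs_neg, abs_one] at this
  linarith

lemma Nrm_cont {n : ℕ} {v : En n} (hv1 : ‖v‖ = 1) : Continuous (Nrm n v) := by
  unfold Nrm
  have h : Continuous fun A : Vp n v →L[ℝ] ℝ =>
    ((((InnerProductSpace.toDual ℝ (Vp n v)).symm A : Vp n v) : En n) + (-1 : ℝ) • v) := by
    have := (InnerProductSpace.toDual ℝ (Vp n v)).symm.continuous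
    exact (continuous_subtype_val.comp this).add continuous_const
  exact (h.norm.inv₀ fun A => (Nrm_pos hv1 _).ne').smul h

lemma convex_subgrad {V : Type*} [NormedAddCommGroup V] [NormedSpace ℝ V] {g : V → ℝ}
    (hg : ConvexOn ℝ univ g) {y : V} (hd : DifferentiableAt ℝ g y) (z : V) :
    g y + fderiv ℝ g y (z - y) ≤ g z := by
  have h1 : HasDerivAt (fun t : ℝ => g (y + t • (z - y))) (fderiv ℝ g y (z - y)) 0 := by
    have h2 : HasDerivAt (fun t : ℝ => y + t • (z - y)) (z - y) 0 := by
      simpa using ((hasDerivAt_id (0 : ℝ)).smul_const (z - y)).const_add y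
    have h3 : HasFDerivAt g (fderiv ℝ g y) (y + (0 : ℝ) • (z - y)) := by
      simpa using hd.hasFDerivAt
    exact h3.comp_hasDerivAt (0 : ℝ) h2
  have h4 := h1.tendsto_slope_zero_right
  have h5 : fderiv ℝ g y (z - y) ≤ g z - g y := by
    apply le_of_tendsto h4
    filter_upwards [Ioo_mem_nhdsGT (zero_lt_one : (0 : ℝ) < 1)] with t ht
    have h6 := hg.2 (mem_univ y) (mem_univ z) (by linarith [ht.2] : 0 ≤ 1 - t) ht.1.le (by ring)
    have h7 : (1 - t) • y + t • z = y + t • (z - y) := by module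
    rw [h7] at h6
    simp only [smul_eq_mul] at h6 ⊢
    rw [inv_mul_le_iff₀ ht.1]
    simp only [zero_add, zero_smul, add_zero]
    linarith
  linarith

lemma normals_eq {n : ℕ} {v : En n} (hv1 : ‖v‖ = 1) {K : Set (En n)}
    {g : Vp n v → ℝ} (hg : IsGraphFn n v K g) (hconv : ConvexOn ℝ univ g) {y : Vp n v}
    (hd : DifferentiableAt ℝ g y) :
    normalsAt n K (y + g y • v) = {Nrm n v (fderiv ℝ g y)} := by
  set a : Vp n v := (InnerProductSpace.toDual ℝ (Vp n v)).symm (fderiv ℝ g y) with ha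
  have hA : ∀ z : Vp n v, fderiv ℝ g y z = ⟪(a : En n), (z : En n)⟫ := by
    intro z
    rw [← Submodule.coe_inner, ha, InnerProductSpace.toDual_symm_apply]
  have hpos := Nrm_pos hv1 a
  have hN : Nrm n v (fderiv ℝ g y) = (‖(a : En n) + (-1 : ℝ) • v‖)⁻¹ • ((a : En n) + (-1 : ℝ) • v) := rfl
  have hinner : ∀ (z b : Vp n v) (s t : ℝ), ⟪(z : En n) + t • v, (b : En n) + s • v⟫ =
      ⟪(b : En n), (z : En n)⟫ + s * t := by
    intro z b s t
    rw [inner_add_right, inner_smul_right, Vp_inner_add hv1, inner_add_left, inner_smul_left,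
      real_inner_comm (b : En n) v, Vp_inner, real_inner_comm (b : En n) (z : En n)]
    simp
  ext u
  simp only [normalsAt, mem_ofPred_eq, mem_singleton_iff]
  constructor
  · rintro ⟨hu1, hu⟩
    obtain ⟨b, hb⟩ := Vp_decomp hv1 u
    set s := ⟪u, v⟫ with hs
    have hu' : ∀ (z : Vp n v) (t : ℝ), g z ≤ t →
        ⟪(b : En n), (z : En n)⟫ + s * t ≤ ⟪(b : En n), (y : En n)⟫ + s * g y := by
      intro z t hzt
      have := hu _ ((hg z t).2 hzt)
      rwa [hb, hinner, hinner] at this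
    have hs0 : s ≤ 0 := by
      have := hu' y (g y + 1) (by linarith)
      linarith
    -- first order condition
    have hmax : IsLocalMax (fun z : Vp n v => ⟪b, z⟫ + s * g z) y := by
      apply Filter.Eventually.of_forall
      intro z
      have := hu' z (g z) le_rfl
      exact this
    have hfd : HasFDerivAt (fun z : Vp n v => ⟪b, z⟫ + s * g z)
        (innerSL ℝ b + s • fderiv ℝ g y) y := by
      exact ((innerSL ℝ b).hasFDerivAt).add (hd.hasFDerivAt.const_mul s)
    have hz := hmax.hasFDerivAt_eq_zero hfd
    have hba : b = -s • a := by
      apply ext_inner_right ℝ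
      intro z
      have h1 := DFunLike.congr_fun hz z
      simp only [add_apply, innerSL_apply_apply,
        smul_apply, zero_apply, smul_eq_mul] at h1
      have h2 : fderiv ℝ g y z = ⟪a, z⟫ := by rw [hA]; rfl
      rw [inner_smul_left, ← h2]
      simp only [conj_trivial]
      linarith
    have hu2 : u = (-s) • ((a : En n) + (-1 : ℝ) • v) := by
      rw [hb, hba]
      push_cast
      module
    have h3 : -s = (‖(a : En n) + (-1 : ℝ) • v‖)⁻¹ := by
      rw [hu2, norm_smul, Real.norm_eq_abs, abs_of_nonneg (by linarith)] at hu1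
      exact eq_inv_of_mul_eq_one_left hu1
    rw [hu2, h3, hN]
  · rintro rfl
    refine ⟨?_, ?_⟩
    · rw [hN, norm_smul, norm_inv, norm_norm, inv_mul_cancel₀ hpos.ne']
    · intro x hx
      obtain ⟨z, hz⟩ := Vp_decomp hv1 x
      generalize ⟪x, v⟫ = t at hz
      subst hz
      rw [hg] at hx
      rw [hN, inner_smul_right, inner_smul_right]
      apply mul_le_mul_of_nonneg_left _ (inv_nonneg.2 hpos.le)
      rw [hinner, hinner, ← hA, ← hA]
      have := convex_subgrad hconv hd z
      rw [map_sub] at this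
      linarith

lemma normal_mem {n : ℕ} {C : Set (En n)} (hC : IsGoodCone n C) {ϖ : Set (En n)}
    (hϖc : IsCompact ϖ) (hϖsub : ϖ ⊆ omegaDual n C) {K : Set (En n)}
    (hK : CDetermined n C ϖ K) {x u : En n} (hx : x ∈ K) (hnorm : normalsAt n K x = {u})
    (hu : u ∈ omegaDual n C) : u ∈ ϖ := by
  obtain ⟨-, -, hCcone, -, -⟩ := hC
  obtain ⟨⟨⟨hne, hcl, hconv, h0, -⟩, hrec⟩, hdet⟩ := hK
  have hKC : K ⊆ C := by
    rw [hdet]; exact inter_subset_left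
  have hx0 : 0 < ‖x‖ := by
    rw [norm_pos_iff]; rintro rfl; exact h0 hx
  obtain ⟨c, hc, hcu⟩ := dual_unif (isCompact_singleton (x := u)) (singleton_subset_iff.2 hu.2)
  have hxu : ⟪x, u⟫ < 0 := by
    have := hcu u rfl x (hKC hx)
    nlinarith
  have huK : u ∈ normalsAt n K x := by rw [hnorm]; rfl
  have hbdd : ∀ w ∈ ϖ, ∀ y ∈ K, ⟪y, w⟫ ≤ suppFn n K w := by
    intro w hw y hy
    apply le_csSup _ (mem_image_of_mem (fun y => ⟪y, w⟫) hy)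
    refine ⟨0, ?_⟩
    rintro _ ⟨z, hz, rfl⟩
    have := (interior_subset (hϖsub hw).2) z (hKC hz)
    rw [real_inner_comm] at this
    exact this
  have hs : ∀ k : ℕ, ∃ w ∈ ϖ, ∀ y ∈ K, ⟪y, w⟫ ≤ (1 - 1 / ((k : ℝ) + 1)) * ⟪x, w⟫ := by
    intro k
    have hk : 0 < 1 / ((k : ℝ) + 1) := by positivity
    have hk1 : 1 / ((k : ℝ) + 1) ≤ 1 := by
      rw [div_le_one (by positivity)]; linarith [(Nat.cast_nonneg k : (0 : ℝ) ≤ k)]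
    set s := 1 / ((k : ℝ) + 1)
    by_contra hcon
    push Not at hcon
    have hmem : (1 - s) • x ∈ K := by
      rw [hdet]
      refine ⟨hCcone x (hKC hx) _ (by linarith), ?_⟩
      simp only [mem_iInter]
      intro w hw
      obtain ⟨y, hy, hlt⟩ := hcon w hw
      have := hbdd w hw y hy
      change ⟪(1 - s) • x, w⟫ ≤ _
      rw [inner_smul_left]
      simp only [conj_trivial]
      linarith
    have := huK.2 _ hmem
    rw [inner_smul_left] at this
    simp only [conj_trivial] at this
    nlinarith
  choose w hwϖ hw using hs
  obtain ⟨w0, hw0, φ, hφ, hlim⟩ := hϖc.tendsto_subseq hwϖ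
  have hw0n : w0 ∈ normalsAt n K x := by
    refine ⟨by simpa using (hϖsub hw0).1, fun y hy => ?_⟩
    have h1 : Tendsto (fun k => ⟪y, w (φ k)⟫) atTop (𝓝 ⟪y, w0⟫) :=
      (tendsto_const_nhds (x := y)).inner hlim
    have h2 : Tendsto (fun k => (1 - 1 / ((φ k : ℝ) + 1)) * ⟪x, w (φ k)⟫) atTop
        (𝓝 ((1 - 0) * ⟪x, w0⟫)) := by
      apply Tendsto.mul
      · exact tendsto_const_nhds.sub (tendsto_one_div_add_atTop_nhds_zero_nat.comp hφ.tendsto_atTop)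
      · exact (tendsto_const_nhds (x := x)).inner hlim
    rw [sub_zero, one_mul] at h2
    exact le_of_tendsto_of_tendsto' h1 h2 fun k => hw (φ k) y hy
  rw [hnorm] at hw0n
  rw [← mem_singleton_iff.1 hw0n]
  exact hw0

lemma graph_tendsto {n : ℕ} {C : Set (En n)} {v : En n} (hv1 : ‖v‖ = 1)
    (hv3 : -v ∈ interior (dualCone n C)) {K : ℕ → Set (En n)} {K₀ : Set (En n)}
    (hKC : ∀ j, K j ⊆ C) (hK₀C : K₀ ⊆ C)
    (hconv : ∃ t₀ > (0 : ℝ), (∀ j, (K j ∩ Cminus n C v t₀).Nonempty) ∧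
      (K₀ ∩ Cminus n C v t₀).Nonempty ∧
      ∀ t > t₀, Tendsto
        (fun j => Metric.hausdorffDist (K j ∩ Cminus n C v t) (K₀ ∩ Cminus n C v t))
        atTop (nhds 0))
    {L : ℝ≥0} {g : ℕ → Vp n v → ℝ} {g₀ : Vp n v → ℝ}
    (hg : ∀ j, IsGraphFn n v (K j) (g j)) (hg₀ : IsGraphFn n v K₀ g₀)
    (hL : ∀ j, LipschitzWith L (g j)) (hL₀ : LipschitzWith L g₀) (y : Vp n v) :
    Tendsto (fun j => g j y) atTop (𝓝 (g₀ y)) := by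
  obtain ⟨t₀, ht₀, hne, hne₀, hlim⟩ := hconv
  obtain ⟨c, hc, hcv⟩ := dual_unif (isCompact_singleton (x := -v)) (singleton_subset_iff.2 hv3)
  have hbd : ∀ t, Bornology.IsBounded (Cminus n C v t) := by
    intro t
    rw [isBounded_iff_forall_norm_le]
    refine ⟨t / c, fun x hx => ?_⟩
    have h1 := hcv _ rfl x hx.1
    have h2 : ⟪x, v⟫ ≤ t := hx.2
    rw [inner_neg_right] at h1
    rw [le_div_iff₀ hc]
    linarith
  have hmono : ∀ t, t₀ < t → Cminus n C v t₀ ⊆ Cminus n C v t := by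
    intro t ht x hx
    exact ⟨hx.1, le_trans hx.2 ht.le⟩
  have hfin : ∀ t, t₀ < t → ∀ j, Metric.hausdorffEDist (K j ∩ Cminus n C v t) (K₀ ∩ Cminus n C v t) ≠ ⊤ := by
    intro t ht j
    apply Metric.hausdorffEDist_ne_top_of_nonempty_of_bounded
    · exact (hne j).mono (inter_subset_inter_right _ (hmono t ht))
    · exact hne₀.mono (inter_subset_inter_right _ (hmono t ht))
    · exact (hbd t).subset inter_subset_right
    · exact (hbd t).subset inter_subset_right
  -- comparison through a nearby point
  have key : ∀ (h : Vp n v → ℝ) (K' : Set (En n)), IsGraphFn n v K' h → LipschitzWith L h →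
      ∀ (s ε : ℝ) (x' : En n), x' ∈ K' → dist ((y : En n) + s • v) x' < ε →
        h y ≤ s + (1 + L) * ε := by
    intro h K' hh hhL s ε x' hx' hdist
    obtain ⟨z, hz⟩ := Vp_decomp hv1 x'
    generalize ⟪x', v⟫ = t at hz
    subst hz
    rw [hh] at hx'
    have e : (y : En n) + s • v - (z + t • v) = ((y - z : Vp n v) : En n) + (s - t) • v := by
      push_cast; module
    rw [dist_eq_norm, e] at hdist
    have h1 := Vp_norm_le (y - z) (s - t)
    have h2 := Vp_abs_le hv1 (y - z) (s - t)
    have h3 := hhL.dist_le_mul y z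
    rw [Real.dist_eq, dist_eq_norm] at h3
    have h4 := (abs_le.1 h3).2
    have h5 := (abs_le.1 h2).1
    have h6 : (L : ℝ) * ‖y - z‖ ≤ L * ε := by
      apply mul_le_mul_of_nonneg_left _ L.2; linarith
    linarith
  rw [Metric.tendsto_atTop]
  intro ε hε
  set η := min 1 ε / (2 * (1 + L)) with hη
  have hL0 : (0 : ℝ) ≤ L := L.2
  have hηpos : 0 < η := by positivity
  have hηm : (1 + L) * η = min 1 ε / 2 := by rw [hη]; field_simp
  set t := max t₀ (g₀ y) + 1 with ht
  have htt : t₀ < t := by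
    have := le_max_left t₀ (g₀ y); linarith
  have htg : g₀ y + 1 ≤ t := by
    have := le_max_right t₀ (g₀ y); linarith
  obtain ⟨J, hJ⟩ := (Metric.tendsto_atTop.1 (hlim t htt)) η hηpos
  refine ⟨J, fun j hj => ?_⟩
  have hd := hJ j hj
  rw [Real.dist_eq, sub_zero, abs_of_nonneg Metric.hausdorffDist_nonneg] at hd
  have m1 : min 1 ε ≤ 1 := min_le_left _ _
  have m2 : min 1 ε ≤ ε := min_le_right _ _
  have hup : g j y ≤ g₀ y + (1 + L) * η := by
    have hx : (y : En n) + g₀ y • v ∈ K₀ := (hg₀ _ _).2 le_rfl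
    obtain ⟨x', hx', hdx⟩ := Metric.exists_dist_lt_of_hausdorffDist_lt'
      (show (y : En n) + g₀ y • v ∈ K₀ ∩ Cminus n C v t from ⟨hx, hK₀C hx, by
        change ⟪_, v⟫ ≤ t
        rw [Vp_inner_add hv1]; linarith⟩) hd (hfin t htt j)
    rw [dist_comm] at hdx
    exact key (g j) (K j) (hg j) (hL j) _ _ x' hx'.1 hdx
  have hlo : g₀ y ≤ g j y + (1 + L) * η := by
    have hx : (y : En n) + g j y • v ∈ K j := (hg j _ _).2 le_rfl
    obtain ⟨x', hx', hdx⟩ := Metric.exists_dist_lt_of_hausdorffDist_lt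
      (show (y : En n) + g j y • v ∈ K j ∩ Cminus n C v t from ⟨hx, hKC j hx, by
        change ⟪_, v⟫ ≤ t
        rw [Vp_inner_add hv1]; linarith⟩) hd (hfin t htt j)
    exact key g₀ K₀ hg₀ hL₀ _ _ x' hx'.1 hdx
  rw [Real.dist_eq, abs_lt]
  constructor <;> linarith

lemma local_lip {V : Type*} [NormedAddCommGroup V] [NormedSpace ℝ V] [FiniteDimensional ℝ V]
    {g : ℕ → V → ℝ} {g₀ : V → ℝ} {L : ℝ≥0} (hc : ∀ j, ConvexOn ℝ univ (g j))
    (hc₀ : ConvexOn ℝ univ g₀) (hL : ∀ j, LipschitzWith L (g j)) (hL₀ : LipschitzWith L g₀)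
    (hlim : ∀ y, Tendsto (fun j => g j y) atTop (𝓝 (g₀ y))) {y : V}
    (hd : DifferentiableAt ℝ g₀ y) {ε : ℝ} (hε : 0 < ε) :
    ∃ r > 0, ∃ J : ℕ, ∀ j ≥ J,
      LipschitzOnWith (Real.toNNReal ε) (fun z => g j z - g₀ z) (Metric.ball y r) := by
  have : ProperSpace V := FiniteDimensional.proper_real V
  set A := fderiv ℝ g₀ y with hA
  have h1 := hd.hasFDerivAt.isLittleO
  rw [Asymptotics.isLittleO_iff] at h1
  have h2 := h1 (show 0 < ε / 12 by positivity)
  obtain ⟨R, hR, hball⟩ := Metric.eventually_nhds_iff_ball.1 h2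
  set r := R / 2 with hr
  have hrpos : 0 < r := by positivity
  have hL0 : (0 : ℝ) ≤ L := L.2
  -- uniform convergence on the ball
  have hunif : ∃ J : ℕ, ∀ j ≥ J, ∀ z ∈ Metric.ball y R, |g j z - g₀ z| ≤ ε / 12 * r := by
    set e := ε / 12 * r / (4 * (L + 1)) with he
    have hepos : 0 < e := by positivity
    obtain ⟨t, -, htf, htc⟩ := (isCompact_closedBall y R).finite_cover_balls hepos
    have hev : ∀ᶠ j in atTop, ∀ x ∈ t, |g j x - g₀ x| < ε / 12 * r / 2 := by
      rw [eventually_all_finite htf]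
      intro x _
      have := (Metric.tendsto_atTop.1 (hlim x)) (ε / 12 * r / 2) (by positivity)
      obtain ⟨J, hJ⟩ := this
      filter_upwards [eventually_ge_atTop J] with j hj
      exact hJ j hj
    obtain ⟨J, hJ⟩ := eventually_atTop.1 hev
    refine ⟨J, fun j hj z hz => ?_⟩
    obtain ⟨x, hx, hzx⟩ := mem_iUnion₂.1 (htc (Metric.ball_subset_closedBall hz))
    have b1 := hJ j hj x hx
    have b2 := (hL j).dist_le_mul z x
    have b3 := hL₀.dist_le_mul z x
    have b4 : (L : ℝ) * dist z x ≤ L * e :=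
      mul_le_mul_of_nonneg_left (le_of_lt hzx) hL0
    have b5 : (L : ℝ) * e ≤ ε / 12 * r / 4 := by
      have : (L + 1 : ℝ) * e = ε / 12 * r / 4 := by rw [he]; field_simp
      linarith
    rw [Real.dist_eq] at b2 b3
    have c1 := abs_lt.1 b1
    have c2 := abs_le.1 (b2.trans (b4.trans b5))
    have c3 := abs_le.1 (b3.trans (b4.trans b5))
    rw [abs_le]
    constructor <;> linarith [c1.1, c1.2, c2.1, c2.2, c3.1, c3.2]
  obtain ⟨J, hJ⟩ := hunif
  have hconv : ∀ h : V → ℝ, ConvexOn ℝ univ h →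
      (∀ z ∈ Metric.ball y R, |h z - g₀ z| ≤ ε / 12 * r) →
      LipschitzOnWith (Real.toNNReal (ε / 2)) (fun z => h z - A z - (g₀ y - A y))
        (Metric.ball y r) := by
    intro h hh hclose
    have hcv : ConvexOn ℝ (Metric.ball y R) (fun z => h z - A z - (g₀ y - A y)) := by
      refine ⟨convex_ball _ _, fun a _ b _ p q hp hq hpq => ?_⟩
      have := hh.2 (mem_univ a) (mem_univ b) hp hq hpq
      simp only [smul_eq_mul, map_add, map_smul] at this ⊢
      have e2 : q = 1 - p := by linarith
      subst e2
      linarith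
    have := hcv.lipschitzOnWith_of_abs_le (M := 3 * (ε / 12) * r) hrpos (by
      intro a ha
      have b1 := hball a ha
      have b2 := hclose a ha
      rw [Real.norm_eq_abs, map_sub] at b1
      have b3 : ‖a - y‖ < R := by rwa [← dist_eq_norm]
      have b4 : ε / 12 * ‖a - y‖ ≤ ε / 12 * (2 * r) := by
        apply mul_le_mul_of_nonneg_left _ (by positivity); rw [hr]; linarith
      have c1 := abs_le.1 (b1.trans b4)
      have c2 := abs_le.1 b2
      rw [abs_le]
      constructor <;> linarith [c1.1, c1.2, c2.1, c2.2])
    have e1 : R - r = r := by rw [hr]; ring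
    have e2 : 2 * (3 * (ε / 12) * r) / r = ε / 2 := by field_simp; norm_num
    rwa [e1, e2] at this
  refine ⟨r, hrpos, J, fun j hj => ?_⟩
  have k1 := hconv (g j) (hc j) (hJ j hj)
  have k2 := hconv g₀ hc₀ (fun z _ => by simp; positivity)
  apply LipschitzOnWith.of_dist_le_mul
  intro a ha b hb
  have l1 := k1.dist_le_mul a ha b hb
  have l2 := k2.dist_le_mul a ha b hb
  rw [Real.coe_toNNReal _ (by positivity), Real.dist_eq] at *
  have c1 := abs_le.1 l1
  have c2 := abs_le.1 l2
  rw [abs_le]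
  constructor <;> linarith [c1.1, c1.2, c2.1, c2.2]

/-- The graph map. -/
def Gr (n : ℕ) (v : En n) (g : Vp n v → ℝ) (y : Vp n v) : En n := (y : En n) + g y • v

lemma Gr_sub {n : ℕ} {v : En n} (g : Vp n v → ℝ) (a b : Vp n v) :
    Gr n v g a - Gr n v g b = ((a - b : Vp n v) : En n) + (g a - g b) • v := by
  unfold Gr; push_cast; module

lemma Gr_dist {n : ℕ} {v : En n} (g : Vp n v → ℝ) (a b : Vp n v) :
    dist a b ≤ dist (Gr n v g a) (Gr n v g b) := by
  rw [dist_eq_norm, dist_eq_norm, Gr_sub]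
  exact Vp_norm_le _ _

lemma Gr_dist_le {n : ℕ} {v : En n} (hv1 : ‖v‖ = 1) (g h : Vp n v → ℝ) (a b : Vp n v) :
    dist (Gr n v g a) (Gr n v g b) ≤
      dist (Gr n v h a) (Gr n v h b) + |(g a - h a) - (g b - h b)| := by
  rw [dist_eq_norm, dist_eq_norm]
  have : Gr n v g a - Gr n v g b = (Gr n v h a - Gr n v h b) +
      ((g a - h a) - (g b - h b)) • v := by
    rw [Gr_sub, Gr_sub]; module
  rw [this]
  refine (norm_add_le _ _).trans ?_
  rw [norm_smul, hv1, mul_one, Real.norm_eq_abs]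

lemma Gr_inj {n : ℕ} {v : En n} (g : Vp n v → ℝ) : Function.Injective (Gr n v g) := by
  intro a b h
  have := Gr_dist g a b
  rw [h, dist_self] at this
  exact dist_le_zero.1 this

lemma Gr_emb {n : ℕ} {v : En n} {g : Vp n v → ℝ} (hg : Continuous g) :
    MeasurableEmbedding (Gr n v g) := by
  have hcont : Continuous (Gr n v g) := by unfold Gr; fun_prop
  exact hcont.measurableEmbedding (Gr_inj g)

lemma Gr_measure_le {n : ℕ} {v : En n} (hv1 : ‖v‖ = 1) {d : ℝ} (hd : 0 ≤ d)
    (g h : Vp n v → ℝ) {ε : ℝ≥0} {s : Set (Vp n v)}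
    (hlip : LipschitzOnWith ε (fun z => g z - h z) s) :
    μH[d] (Gr n v g '' s) ≤ ((1 + ε : ℝ≥0) : ℝ≥0∞) ^ d * μH[d] (Gr n v h '' s) := by
  have hl : LipschitzOnWith (1 + ε) (Gr n v g ∘ Function.invFun (Gr n v h)) (Gr n v h '' s) := by
    apply LipschitzOnWith.of_dist_le_mul
    rintro _ ⟨a, ha, rfl⟩ _ ⟨b, hb, rfl⟩
    simp only [Function.comp, Function.leftInverse_invFun (Gr_inj h) _]
    have h1 := Gr_dist_le hv1 g h a b
    have h2 := hlip.dist_le_mul a ha b hb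
    rw [Real.dist_eq] at h2
    have h3 : (ε : ℝ) * dist a b ≤ ε * dist (Gr n v h a) (Gr n v h b) :=
      mul_le_mul_of_nonneg_left (Gr_dist h a b) ε.2
    push_cast
    linarith
  have := hl.hausdorffMeasure_image_le hd
  rw [image_image] at this
  simp only [Function.comp, Function.leftInverse_invFun (Gr_inj h) _] at this
  exact this

lemma Gr_measure_le' {n : ℕ} {v : En n} (hv1 : ‖v‖ = 1) {d : ℝ} (hd : 0 ≤ d)
    (g : Vp n v → ℝ) {L : ℝ≥0} (hlip : LipschitzWith L g) (s : Set (Vp n v)) :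
    μH[d] (Gr n v g '' s) ≤ ((1 + L : ℝ≥0) : ℝ≥0∞) ^ d * μH[d] s := by
  have : LipschitzWith (1 + L) (Gr n v g) := by
    apply LipschitzWith.of_dist_le_mul
    intro a b
    have h1 := Gr_dist_le hv1 g (fun _ => 0) a b
    have h2 := hlip.dist_le_mul a b
    rw [Real.dist_eq] at h2
    have h3 : dist (Gr n v (fun _ => 0) a) (Gr n v (fun _ => 0) b) = dist a b := by
      simp [Gr, Subtype.dist_eq]
    simp only [sub_zero] at h1
    push_cast
    linarith
  exact this.hausdorffMeasure_image_le hd s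

/-- Pull-back of the Hausdorff measure on the graph of `g`. -/
def mG (n : ℕ) (v : En n) (g : Vp n v → ℝ) : Measure (Vp n v) :=
  Measure.comap (Gr n v g) μH[(n : ℝ) - 1]

/-- Reference measure on the hyperplane. -/
def lam (n : ℕ) (v : En n) : Measure (Vp n v) := μH[(n : ℝ) - 1]

lemma lam_haar {n : ℕ} {v : En n} (hn : 2 ≤ n) (hv1 : ‖v‖ = 1) :
    (lam n v).IsAddHaarMeasure := by
  have hv0 : v ≠ 0 := by rintro rfl; simp at hv1
  have h := Submodule.finrank_add_finrank_orthogonal (ℝ ∙ v)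
  rw [finrank_span_singleton hv0, finrank_euclideanSpace_fin] at h
  have h2 : ((Module.finrank ℝ (Vp n v) : ℕ) : ℝ) = (n : ℝ) - 1 := by
    have h3 : ((1 + Module.finrank ℝ (Vp n v) : ℕ) : ℝ) = n := congrArg Nat.cast h
    push_cast at h3
    linarith
  unfold lam
  rw [← h2]
  infer_instance

lemma mG_apply {n : ℕ} {v : En n} {g : Vp n v → ℝ} (hg : Continuous g) (s : Set (Vp n v)) :
    mG n v g s = μH[(n : ℝ) - 1] (Gr n v g '' s) :=
  (Gr_emb hg).comap_apply _ _

/-- Lipschitz factor. -/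
def facC (n : ℕ) (L : ℝ≥0) : ℝ≥0 := (1 + L) ^ ((n : ℝ) - 1)

lemma facC_coe {n : ℕ} (hn : 2 ≤ n) (L : ℝ≥0) :
    ((1 + L : ℝ≥0) : ℝ≥0∞) ^ ((n : ℝ) - 1) = (facC n L : ℝ≥0∞) := by
  have : (2 : ℝ) ≤ n := by exact_mod_cast hn
  unfold facC
  rw [ENNReal.coe_rpow_of_nonneg _ (by linarith)]

lemma mG_le {n : ℕ} {v : En n} (hn : 2 ≤ n) (hv1 : ‖v‖ = 1) {g : Vp n v → ℝ} {L : ℝ≥0}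
    (hg : LipschitzWith L g) : mG n v g ≤ facC n L • lam n v := by
  have hn' : (2 : ℝ) ≤ n := by exact_mod_cast hn
  intro s
  rw [mG_apply hg.continuous]
  have := Gr_measure_le' hv1 (d := (n : ℝ) - 1) (by linarith) g hg s
  rw [facC_coe hn] at this
  exact this

/-- The density. -/
def den (n : ℕ) (v : En n) (g : Vp n v → ℝ) : Vp n v → ℝ≥0∞ := (mG n v g).rnDeriv (lam n v)

lemma den_meas {n : ℕ} {v : En n} (g : Vp n v → ℝ) : Measurable (den n v g) :=
  Measure.measurable_rnDeriv _ _

lemma mG_ac {n : ℕ} {v : En n} (hn : 2 ≤ n) (hv1 : ‖v‖ = 1) {g : Vp n v → ℝ} {L : ℝ≥0}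
    (hg : LipschitzWith L g) : mG n v g ≪ lam n v := by
  intro s hs
  have h : mG n v g s ≤ facC n L • lam n v s := mG_le hn hv1 hg s
  rw [hs, smul_zero] at h
  exact le_antisymm h bot_le

lemma mG_den {n : ℕ} {v : En n} (hn : 2 ≤ n) (hv1 : ‖v‖ = 1) {g : Vp n v → ℝ} {L : ℝ≥0}
    (hg : LipschitzWith L g) : (lam n v).withDensity (den n v g) = mG n v g := by
  have := lam_haar hn hv1
  have : SigmaFinite (mG n v g) := by
    exact Measure.sigmaFinite_of_le _ (mG_le hn hv1 hg)
  exact Measure.withDensity_rnDeriv_eq _ _ (mG_ac hn hv1 hg)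

lemma den_le {n : ℕ} {v : En n} (hn : 2 ≤ n) (hv1 : ‖v‖ = 1) {g : Vp n v → ℝ} {L : ℝ≥0}
    (hg : LipschitzWith L g) : ∀ᵐ y ∂(lam n v), den n v g y ≤ facC n L := by
  have := lam_haar hn hv1
  apply ae_le_of_forall_setLIntegral_le_of_sigmaFinite (den_meas g)
  intro s hs _
  rw [← withDensity_apply _ hs, mG_den hn hv1 hg, setLIntegral_const]
  exact mG_le hn hv1 hg s

lemma den_compare {n : ℕ} {v : En n} (hn : 2 ≤ n) (hv1 : ‖v‖ = 1) {g h : Vp n v → ℝ} {L : ℝ≥0}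
    (hg : LipschitzWith L g) (hh : LipschitzWith L h) {ε : ℝ≥0} {B : Set (Vp n v)}
    (hB : MeasurableSet B) (hlip : LipschitzOnWith ε (fun z => g z - h z) B) :
    ∀ᵐ y ∂(lam n v), y ∈ B → den n v g y ≤ facC n ε * den n v h y := by
  have := lam_haar hn hv1
  have hn' : (2 : ℝ) ≤ n := by exact_mod_cast hn
  rw [← ae_restrict_iff' hB]
  apply ae_le_of_forall_setLIntegral_le_of_sigmaFinite (den_meas g)
  intro s hs _
  rw [Measure.restrict_restrict hs, lintegral_const_mul _ (den_meas h),
    ← withDensity_apply _ (hs.inter hB), ← withDensity_apply _ (hs.inter hB), mG_den hn hv1 hg,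
    mG_den hn hv1 hh, mG_apply hg.continuous, mG_apply hh.continuous, ← facC_coe hn]
  exact Gr_measure_le hv1 (by linarith) g h (hlip.mono inter_subset_right)

lemma facC_tendsto (n : ℕ) :
    Tendsto (fun k : ℕ => ((facC n (Real.toNNReal (1 / ((k : ℝ) + 1))) : ℝ≥0) : ℝ)) atTop (𝓝 1) := by
  unfold facC
  have h1 : Tendsto (fun k : ℕ => (1 + 1 / ((k : ℝ) + 1))) atTop (𝓝 (1 + 0)) :=
    tendsto_const_nhds.add tendsto_one_div_add_atTop_nhds_zero_nat
  rw [add_zero] at h1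
  have h2 := h1.rpow_const (p := (n : ℝ) - 1) (Or.inl one_ne_zero)
  rw [Real.one_rpow] at h2
  refine h2.congr fun k => ?_
  rw [NNReal.coe_rpow]
  push_cast
  rw [Real.coe_toNNReal _ (by positivity)]

lemma den_tendsto {n : ℕ} {v : En n} (hn : 2 ≤ n) (hv1 : ‖v‖ = 1)
    {g : ℕ → Vp n v → ℝ} {g₀ : Vp n v → ℝ} {L : ℝ≥0} (hc : ∀ j, ConvexOn ℝ univ (g j))
    (hc₀ : ConvexOn ℝ univ g₀) (hL : ∀ j, LipschitzWith L (g j)) (hL₀ : LipschitzWith L g₀)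
    (hlim : ∀ y, Tendsto (fun j => g j y) atTop (𝓝 (g₀ y))) :
    ∀ᵐ y ∂(lam n v), Tendsto (fun j => (den n v (g j) y).toReal) atTop
      (𝓝 (den n v g₀ y).toReal) := by
  have := lam_haar hn hv1
  set D := {y | DifferentiableAt ℝ g₀ y} with hD
  have hloc : ∀ (k : ℕ) (y : Vp n v), ∃ r > 0, ∃ J : ℕ, y ∈ D → ∀ j ≥ J,
      LipschitzOnWith (Real.toNNReal (1 / ((k : ℝ) + 1))) (fun z => g j z - g₀ z)
        (Metric.ball y r) := by
    intro k y
    by_cases hy : y ∈ D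
    · obtain ⟨r, hr, J, h⟩ := local_lip hc hc₀ hL hL₀ hlim hy
        (show 0 < 1 / ((k : ℝ) + 1) by positivity)
      exact ⟨r, hr, J, fun _ => h⟩
    · exact ⟨1, one_pos, 0, fun h => absurd h hy⟩
  choose r hr J hJ using hloc
  have hcov : ∀ k : ℕ, ∃ t ⊆ D, t.Countable ∧ D ⊆ ⋃ x ∈ t, Metric.ball x (r k x) := by
    intro k
    apply TopologicalSpace.countable_cover_nhdsWithin
    intro x _
    exact mem_nhdsWithin_of_mem_nhds (Metric.ball_mem_nhds x (hr k x))
  choose t htD htc htcov using hcov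
  have hae : ∀ᵐ y ∂(lam n v), ∀ k : ℕ, ∀ x ∈ t k, ∀ j : ℕ, J k x ≤ j → y ∈ Metric.ball x (r k x) →
      den n v (g j) y ≤ facC n (Real.toNNReal (1 / ((k : ℝ) + 1))) * den n v g₀ y ∧
      den n v g₀ y ≤ facC n (Real.toNNReal (1 / ((k : ℝ) + 1))) * den n v (g j) y := by
    rw [ae_all_iff]
    intro k
    rw [ae_ball_iff (htc k)]
    intro x hx
    rw [ae_all_iff]
    intro j
    by_cases hj : J k x ≤ j
    · have hl := hJ k x (htD k hx) j hj
      have hl' : LipschitzOnWith (Real.toNNReal (1 / ((k : ℝ) + 1))) (fun z => g₀ z - g j z)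
          (Metric.ball x (r k x)) := by
        apply LipschitzOnWith.of_dist_le_mul
        intro a ha b hb
        have := hl.dist_le_mul a ha b hb
        rw [Real.dist_eq] at this ⊢
        rw [← abs_neg]
        convert this using 2
        ring
      filter_upwards [den_compare hn hv1 (hL j) hL₀ Metric.isOpen_ball.measurableSet hl,
        den_compare hn hv1 hL₀ (hL j) Metric.isOpen_ball.measurableSet hl'] with y h1 h2 _ hy
      exact ⟨h1 hy, h2 hy⟩
    · exact Eventually.of_forall fun y h => absurd h hj
  have hle : ∀ᵐ y ∂(lam n v), ∀ j, den n v (g j) y ≤ facC n L :=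
    ae_all_iff.2 fun j => den_le hn hv1 (hL j)
  filter_upwards [hae, hle, den_le hn hv1 hL₀, hL₀.ae_differentiableAt (μ := lam n v)]
    with y h1 h2 h3 h4
  have hfin : ∀ j, den n v (g j) y ≠ ∞ := fun j => ((h2 j).trans_lt ENNReal.coe_lt_top).ne
  have hfin0 : den n v g₀ y ≠ ∞ := (h3.trans_lt ENNReal.coe_lt_top).ne
  have hk : ∀ k : ℕ, ∀ᶠ j in atTop,
      (den n v (g j) y).toReal ≤
        facC n (Real.toNNReal (1 / ((k : ℝ) + 1))) * (den n v g₀ y).toReal ∧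
      (den n v g₀ y).toReal ≤
        facC n (Real.toNNReal (1 / ((k : ℝ) + 1))) * (den n v (g j) y).toReal := by
    intro k
    obtain ⟨x, hx, hyx⟩ := mem_iUnion₂.1 (htcov k h4)
    filter_upwards [eventually_ge_atTop (J k x)] with j hj
    obtain ⟨p1, p2⟩ := h1 k x hx j hj hyx
    constructor
    · have := ENNReal.toReal_mono (ENNReal.mul_ne_top ENNReal.coe_ne_top hfin0) p1
      simpa using this
    · have := ENNReal.toReal_mono (ENNReal.mul_ne_top ENNReal.coe_ne_top (hfin j)) p2
      simpa using this
  have hT := facC_tendsto n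
  rw [tendsto_order]
  constructor
  · intro a ha
    have h5 := hT.inv₀ one_ne_zero
    have h6 := h5.mul_const (den n v g₀ y).toReal
    rw [inv_one, one_mul] at h6
    obtain ⟨k, hk1, hk2⟩ := ((h6.eventually (lt_mem_nhds ha)).and
      (hT.eventually (lt_mem_nhds zero_lt_one))).exists
    filter_upwards [hk k] with j hj
    refine hk1.trans_le ?_
    rw [inv_mul_le_iff₀ hk2]
    exact hj.2
  · intro a ha
    have h6 := hT.mul_const (den n v g₀ y).toReal
    rw [one_mul] at h6
    obtain ⟨k, hk1⟩ := (h6.eventually (gt_mem_nhds ha)).exists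
    filter_upwards [hk k] with j hj
    exact hj.1.trans_lt hk1

lemma fderiv_tendsto {V : Type*} [NormedAddCommGroup V] [NormedSpace ℝ V] [FiniteDimensional ℝ V]
    {g : ℕ → V → ℝ} {g₀ : V → ℝ} {L : ℝ≥0} (hc : ∀ j, ConvexOn ℝ univ (g j))
    (hc₀ : ConvexOn ℝ univ g₀) (hL : ∀ j, LipschitzWith L (g j)) (hL₀ : LipschitzWith L g₀)
    (hlim : ∀ y, Tendsto (fun j => g j y) atTop (𝓝 (g₀ y))) {y : V}
    (hd₀ : DifferentiableAt ℝ g₀ y) (hd : ∀ j, DifferentiableAt ℝ (g j) y) :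
    Tendsto (fun j => fderiv ℝ (g j) y) atTop (𝓝 (fderiv ℝ g₀ y)) := by
  rw [Metric.tendsto_atTop]
  intro ε hε
  obtain ⟨r, hr, J, hJ⟩ := local_lip hc hc₀ hL hL₀ hlim hd₀ (half_pos hε)
  refine ⟨J, fun j hj => ?_⟩
  have := norm_fderiv_le_of_lipschitzOn ℝ (Metric.ball_mem_nhds y hr) (hJ j hj)
  rw [Real.coe_toNNReal _ (half_pos hε).le, fderiv_fun_sub (hd j) hd₀] at this
  rw [dist_eq_norm]
  linarith

/-- Parametrised density of the weighted surface area measure. -/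
def Dn (n : ℕ) (v : En n) (C : Set (En n)) (Θ : En n → ℝ) (g : Vp n v → ℝ) : Vp n v → ℝ≥0∞ :=
  indicator {y | Nrm n v (fderiv ℝ g y) ∈ omegaDual n C}
    (fun y => den n v g y * ENNReal.ofReal (Θ (Gr n v g y)))

lemma N_meas {n : ℕ} {v : En n} (hv1 : ‖v‖ = 1) (g : Vp n v → ℝ) :
    Measurable (fun y => Nrm n v (fderiv ℝ g y)) :=
  (Nrm_cont hv1).measurable.comp (measurable_fderiv ℝ g)

lemma omega_meas (n : ℕ) (C : Set (En n)) : MeasurableSet (omegaDual n C) :=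
  Metric.isClosed_sphere.measurableSet.inter isOpen_interior.measurableSet

lemma Gr_mem {n : ℕ} {v : En n} {K : Set (En n)} {g : Vp n v → ℝ} (hg : IsGraphFn n v K g)
    (y : Vp n v) : Gr n v g y ∈ K := (hg y (g y)).2 le_rfl

lemma Gr_cont {n : ℕ} {v : En n} {g : Vp n v → ℝ} (hg : Continuous g) : Continuous (Gr n v g) := by
  unfold Gr; fun_prop

lemma CDet_sub {n : ℕ} {C ϖ K : Set (En n)} (hK : CDetermined n C ϖ K) : K ⊆ C \ {0} := by
  intro x hx
  refine ⟨?_, ?_⟩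
  · have h := hx
    rw [hK.2] at h
    exact h.1
  · rintro rfl
    exact hK.1.1.2.2.2.1 hx

lemma ThetaGr_cont {n : ℕ} {v : En n} {C ϖ K : Set (En n)} {q : ℝ} {Θ : En n → ℝ}
    (hΘ : IsThetaWeight n C q Θ) (hK : CDetermined n C ϖ K) {g : Vp n v → ℝ}
    (hg : IsGraphFn n v K g) (hc : Continuous g) : Continuous (fun y => Θ (Gr n v g y)) :=
  hΘ.1.comp_continuous (Gr_cont hc) (fun y => CDet_sub hK (Gr_mem hg y))

lemma Dn_meas {n : ℕ} {v : En n} (hv1 : ‖v‖ = 1) {C ϖ K : Set (En n)} {q : ℝ} {Θ : En n → ℝ}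
    (hΘ : IsThetaWeight n C q Θ) (hK : CDetermined n C ϖ K) {g : Vp n v → ℝ}
    (hg : IsGraphFn n v K g) (hc : Continuous g) : Measurable (Dn n v C Θ g) := by
  unfold Dn
  apply Measurable.indicator
  · exact (den_meas g).mul (ThetaGr_cont hΘ hK hg hc).measurable.ennreal_ofReal
  · exact N_meas hv1 g (omega_meas n C)

lemma rep_measure {n : ℕ} (hn : 2 ≤ n) {v : En n} (hv1 : ‖v‖ = 1) {C ϖ K : Set (En n)} {q : ℝ}
    {Θ : En n → ℝ} (hΘ : IsThetaWeight n C q Θ) (hK : CDetermined n C ϖ K) {g : Vp n v → ℝ}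
    (hg : IsGraphFn n v K g) {L : ℝ≥0} (hL : LipschitzWith L g) (hcv : ConvexOn ℝ univ g)
    {μ : Measure (En n)} (hμ : RepsSurf n C Θ K μ) :
    μ = Measure.map (fun y => Nrm n v (fderiv ℝ g y)) ((lam n v).withDensity (Dn n v C Θ g)) := by
  have := lam_haar hn hv1
  have hc := hL.continuous
  have hN := N_meas hv1 g
  have hfr : frontier K = range (Gr n v g) := graph_frontier hv1 hK.1.1.2.1 hg hc
  have hemb := Gr_emb (n := n) (v := v) hc
  ext ω hω
  rw [Measure.map_apply hN hω, withDensity_apply _ (hN hω)]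
  unfold Dn
  have hS : MeasurableSet {y : Vp n v | Nrm n v (fderiv ℝ g y) ∈ omegaDual n C} :=
    hN (omega_meas n C)
  rw [setLIntegral_indicator hS]
  set T : Set (Vp n v) := {y : Vp n v | Nrm n v (fderiv ℝ g y) ∈ omegaDual n C} ∩
    (fun y => Nrm n v (fderiv ℝ g y)) ⁻¹' ω with hT
  have hTm : MeasurableSet T := hS.inter (hN hω)
  have h1 : μ ω = μ (ω ∩ omegaDual n C) := (measure_inter_conull hμ.1).symm
  rw [h1, hμ.2 _ (hω.inter (omega_meas n C)) inter_subset_right]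
  unfold surfTheta
  -- null set
  have hnull : μH[(n : ℝ) - 1] (Gr n v g '' {y | ¬ DifferentiableAt ℝ g y}) = 0 := by
    rw [← mG_apply hc]
    apply mG_ac hn hv1 hL
    exact hL.ae_differentiableAt (μ := lam n v)
  have hae : (nuInv n K (ω ∩ omegaDual n C) : Set (En n)) =ᵐ[μH[(n : ℝ) - 1]] Gr n v g '' T := by
    have hZ : ∀ᵐ x ∂(μH[(n : ℝ) - 1] : Measure (En n)),
        x ∉ Gr n v g '' {y | ¬ DifferentiableAt ℝ g y} := measure_eq_zero_iff_ae_notMem.1 hnull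
    filter_upwards [hZ] with x hx
    apply propext
    change x ∈ nuInv n K (ω ∩ omegaDual n C) ↔ x ∈ Gr n v g '' T
    constructor
    · rintro ⟨hxf, u, hu, hnu⟩
      rw [hfr] at hxf
      obtain ⟨y, rfl⟩ := hxf
      have hd : DifferentiableAt ℝ g y := by
        by_contra hcon
        exact hx ⟨y, hcon, rfl⟩
      have := normals_eq hv1 hg hcv hd
      change normalsAt n K (Gr n v g y) = _ at this
      rw [hnu] at this
      have hu2 : u = Nrm n v (fderiv ℝ g y) := singleton_injective this
      subst hu2
      exact ⟨y, ⟨hu.2, hu.1⟩, rfl⟩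
    · rintro ⟨y, hy, rfl⟩
      have hd : DifferentiableAt ℝ g y := by
        by_contra hcon
        exact hx ⟨y, hcon, rfl⟩
      refine ⟨?_, _, ⟨hy.2, hy.1⟩, normals_eq hv1 hg hcv hd⟩
      rw [hfr]; exact mem_range_self y
  rw [setLIntegral_congr hae]
  have hres : (μH[(n : ℝ) - 1] : Measure (En n)).restrict (Gr n v g '' T)
      = ((mG n v g).restrict T).map (Gr n v g) := by
    have e1 := hemb.map_comap (μH[(n : ℝ) - 1] : Measure (En n))
    have e2 := hemb.restrict_map (mG n v g) (Gr n v g '' T)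
    rw [preimage_image_eq _ (Gr_inj g)] at e2
    rw [← e2]
    unfold mG
    rw [e1, Measure.restrict_restrict (hemb.measurableSet_image.2 hTm),
      inter_eq_self_of_subset_left (image_subset_range _ _)]
  rw [hres, hemb.lintegral_map, ← mG_den hn hv1 hL,
    setLIntegral_withDensity_eq_setLIntegral_mul _ (den_meas g)
      (ThetaGr_cont hΘ hK hg hc).measurable.ennreal_ofReal hTm]
  rfl

lemma rep_integral {n : ℕ} (hn : 2 ≤ n) {v : En n} (hv1 : ‖v‖ = 1) {C ϖ K : Set (En n)} {q : ℝ}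
    {Θ : En n → ℝ} (hΘ : IsThetaWeight n C q Θ) (hK : CDetermined n C ϖ K) {g : Vp n v → ℝ}
    (hg : IsGraphFn n v K g) {L : ℝ≥0} (hL : LipschitzWith L g) (hcv : ConvexOn ℝ univ g)
    {μ : Measure (En n)} (hμ : RepsSurf n C Θ K μ) (f : BoundedContinuousFunction (En n) ℝ) :
    ∫ x, f x ∂μ =
      ∫ y, (Dn n v C Θ g y).toReal * f (Nrm n v (fderiv ℝ g y)) ∂(lam n v) := by
  rw [rep_measure hn hv1 hΘ hK hg hL hcv hμ,
    integral_map (N_meas hv1 g).aemeasurable f.continuous.aestronglyMeasurable,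
    integral_withDensity_eq_integral_toReal_smul (Dn_meas hv1 hΘ hK hg hL.continuous)]
  · rfl
  · filter_upwards [den_le hn hv1 hL] with y hy
    unfold Dn
    by_cases h : y ∈ {y : Vp n v | Nrm n v (fderiv ℝ g y) ∈ omegaDual n C}
    · rw [indicator_of_mem h]
      exact ENNReal.mul_lt_top (hy.trans_lt ENNReal.coe_lt_top) ENNReal.ofReal_lt_top
    · rw [indicator_of_notMem h]; simp

lemma Dn_toReal {n : ℕ} {v : En n} {C ϖ K : Set (En n)} {q : ℝ} {Θ : En n → ℝ}
    (hΘ : IsThetaWeight n C q Θ) (hK : CDetermined n C ϖ K) {g : Vp n v → ℝ}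
    (hg : IsGraphFn n v K g) {y : Vp n v} (hy : Nrm n v (fderiv ℝ g y) ∈ omegaDual n C) :
    (Dn n v C Θ g y).toReal = (den n v g y).toReal * Θ (Gr n v g y) := by
  have h : y ∈ {y : Vp n v | Nrm n v (fderiv ℝ g y) ∈ omegaDual n C} := hy
  unfold Dn
  rw [indicator_of_mem h, ENNReal.toReal_mul,
    ENNReal.toReal_ofReal (hΘ.2.1 _ (CDet_sub hK (Gr_mem hg y))).le]

lemma Dn_zero {n : ℕ} {v : En n} {C : Set (En n)} {Θ : En n → ℝ} {g : Vp n v → ℝ} {y : Vp n v}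
    (hy : Nrm n v (fderiv ℝ g y) ∉ omegaDual n C) : Dn n v C Θ g y = 0 := by
  have h : y ∉ {y : Vp n v | Nrm n v (fderiv ℝ g y) ∈ omegaDual n C} := hy
  unfold Dn
  rw [indicator_of_notMem h]

lemma N_unit {n : ℕ} {v : En n} (hv1 : ‖v‖ = 1) (A : Vp n v →L[ℝ] ℝ) : ‖Nrm n v A‖ = 1 := by
  unfold Nrm
  rw [norm_smul, norm_inv, norm_norm]
  exact inv_mul_cancel₀ (ne_of_gt (Nrm_pos hv1 _))

/-- Points with normal in `Ω_{C°}` stay in a fixed ball. -/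
lemma exists_radius {n : ℕ} {C : Set (En n)} (hC : IsGoodCone n C)
    {v : En n} (hv1 : ‖v‖ = 1) (hv3 : -v ∈ interior (dualCone n C))
    {ϖ : Set (En n)} (hϖc : IsCompact ϖ) (hϖsub : ϖ ⊆ omegaDual n C) (t₀ : ℝ) :
    ∃ R : ℝ, ∀ (K : Set (En n)) (g : Vp n v → ℝ), CDetermined n C ϖ K →
      (K ∩ Cminus n C v t₀).Nonempty → IsGraphFn n v K g → ConvexOn ℝ univ g →
      ∀ y, DifferentiableAt ℝ g y → Nrm n v (fderiv ℝ g y) ∈ omegaDual n C →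
      ‖Gr n v g y‖ ≤ R := by
  obtain ⟨c, hc, hcϖ⟩ := dual_unif hϖc (hϖsub.trans inter_subset_right)
  obtain ⟨c', hc', hcv⟩ := dual_unif (isCompact_singleton (x := -v)) (singleton_subset_iff.2 hv3)
  refine ⟨t₀ / c' / c, ?_⟩
  intro K g hK hne hg hcx y hd hy
  have hnor : normalsAt n K (Gr n v g y) = {Nrm n v (fderiv ℝ g y)} := normals_eq hv1 hg hcx hd
  have hmem := normal_mem hC hϖc hϖsub hK (Gr_mem hg y) hnor hy
  obtain ⟨z, hzK, hzC, hzt⟩ := hne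
  change ⟪z, v⟫ ≤ t₀ at hzt
  have h1 := hcϖ _ hmem _ (CDet_sub hK (Gr_mem hg y)).1
  have h2 : Nrm n v (fderiv ℝ g y) ∈ normalsAt n K (Gr n v g y) := by rw [hnor]; rfl
  have h3 := h2.2 z hzK
  have h4 := abs_le.1 (abs_real_inner_le_norm z (Nrm n v (fderiv ℝ g y)))
  rw [N_unit hv1, mul_one] at h4
  have h5 := hcv (-v) rfl z hzC
  rw [inner_neg_right] at h5
  have h6 : ‖z‖ ≤ t₀ / c' := by rw [le_div_iff₀ hc']; linarith
  rw [le_div_iff₀ hc]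
  linarith [h4.1]
/-- If `K_j ∈ K(C,ϖ)` and `K_j → K₀`, then the `Θ`-weighted surface area
measures converge weakly: `S_{n-1}^Θ(K_j,·) → S_{n-1}^Θ(K₀,·)`. -/
theorem statement11 (n : ℕ) (hn : 2 ≤ n) (C : Set (En n)) (hC : IsGoodCone n C)
    (v : En n) (hv1 : ‖v‖ = 1) (hv2 : v ∈ interior C) (hv3 : -v ∈ interior (dualCone n C))
    (q : ℝ) (hq1 : (n : ℝ) - 1 < q) (hq2 : q < n)
    (Θ : En n → ℝ) (hΘ : IsThetaWeight n C q Θ)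
    (ϖ : Set (En n)) (hϖne : ϖ.Nonempty) (hϖc : IsCompact ϖ) (hϖsub : ϖ ⊆ omegaDual n C)
    (K : ℕ → Set (En n)) (K₀ : Set (En n))
    (hKj : ∀ j, CDetermined n C ϖ (K j)) (hK₀ : CDetermined n C ϖ K₀)
    (hconv : ∃ t₀ > (0 : ℝ), (∀ j, (K j ∩ Cminus n C v t₀).Nonempty) ∧
      (K₀ ∩ Cminus n C v t₀).Nonempty ∧
      ∀ t > t₀, Tendsto
        (fun j => Metric.hausdorffDist (K j ∩ Cminus n C v t) (K₀ ∩ Cminus n C v t))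
        atTop (nhds 0))
    (μ : ℕ → Measure (En n)) (μ₀ : Measure (En n))
    (hμ : ∀ j, RepsSurf n C Θ (K j) (μ j)) (hμ₀ : RepsSurf n C Θ K₀ μ₀) :
    ∀ f : BoundedContinuousFunction (En n) ℝ,
      Tendsto (fun j => ∫ x, f x ∂(μ j)) atTop (nhds (∫ x, f x ∂μ₀)) := by
  intro f
  have hlam := lam_haar hn hv1
  obtain ⟨L, hLall⟩ := exists_graph hC hv1 hv2 hv3
  choose g hg hL hcx using fun j => hLall ϖ (K j) (hKj j)
  obtain ⟨g₀, hg₀, hL₀, hcx₀⟩ := hLall ϖ K₀ hK₀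
  have hlim := graph_tendsto hv1 hv3 (fun j => (CDet_sub (hKj j)).trans sdiff_subset)
    ((CDet_sub hK₀).trans sdiff_subset) hconv hg hg₀ hL hL₀
  obtain ⟨t₀, ht₀, hne, hne₀, -⟩ := hconv
  obtain ⟨R, hR⟩ := exists_radius hC hv1 hv3 hϖc hϖsub t₀
  -- lower bound for the norm
  have hg00 : 0 < g₀ 0 := by
    by_contra hcon
    have := (hg₀ 0 0).2 (not_lt.1 hcon)
    simp only [ZeroMemClass.coe_zero, zero_smul, add_zero] at this
    exact (CDet_sub hK₀ this).2 rfl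
  set b : ℝ := g₀ 0 / 2 / (1 + L) with hb
  have hLpos : (0 : ℝ) < 1 + L := by positivity
  have hbpos : 0 < b := by positivity
  have hlow : ∀ h : Vp n v → ℝ, LipschitzWith L h → g₀ 0 / 2 < h 0 →
      ∀ y, b ≤ ‖Gr n v h y‖ := by
    intro h hh h0 y
    have h1 : h 0 - h y ≤ L * ‖y‖ := by
      have := hh.dist_le_mul 0 y
      rw [dist_zero_left, Real.dist_eq] at this
      exact (le_abs_self _).trans this
    have h2 : ‖y‖ ≤ ‖Gr n v h y‖ := Vp_norm_le y (h y)
    have h3 : |h y| ≤ ‖Gr n v h y‖ := Vp_abs_le hv1 y (h y)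
    have h4 := le_abs_self (h y)
    have h5 : (L : ℝ) * ‖y‖ ≤ L * ‖Gr n v h y‖ := mul_le_mul_of_nonneg_left h2 L.2
    rw [hb, div_le_iff₀ hLpos]
    nlinarith
  -- bound for the weight
  have hcomp : IsCompact (C ∩ {x | b ≤ ‖x‖} ∩ Metric.closedBall (0 : En n) R) :=
    (isCompact_closedBall _ _).inter_left
      (hC.1.inter (isClosed_le continuous_const continuous_norm))
  obtain ⟨M, hM⟩ := hcomp.exists_bound_of_continuousOn (f := Θ) (hΘ.1.mono (by
    rintro x ⟨⟨hx1, hx2⟩, -⟩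
    refine ⟨hx1, ?_⟩
    rintro rfl
    change b ≤ ‖(0 : En n)‖ at hx2
    rw [norm_zero] at hx2
    linarith))
  rw [rep_integral hn hv1 hΘ hK₀ hg₀ hL₀ hcx₀ hμ₀ f]
  simp_rw [fun j => rep_integral hn hv1 hΘ (hKj j) (hg j) (hL j) (hcx j) (hμ j) f]
  have hdiff : ∀ᵐ y ∂(lam n v), ∀ j, DifferentiableAt ℝ (g j) y :=
    ae_all_iff.2 fun j => (hL j).ae_differentiableAt (μ := lam n v)
  have hdiff₀ : ∀ᵐ y ∂(lam n v), DifferentiableAt ℝ g₀ y :=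
    hL₀.ae_differentiableAt (μ := lam n v)
  have hden : ∀ᵐ y ∂(lam n v), ∀ j, den n v (g j) y ≤ facC n L :=
    ae_all_iff.2 fun j => den_le hn hv1 (hL j)
  have hev : ∀ᶠ j in atTop, g₀ 0 / 2 < g j 0 :=
    (hlim 0).eventually (lt_mem_nhds (by linarith))
  refine tendsto_integral_filter_of_dominated_convergence
    (indicator (Metric.closedBall 0 R) fun _ => (facC n L : ℝ) * |M| * ‖f‖) ?_ ?_ ?_ ?_
  · refine Eventually.of_forall fun j => ?_
    exact (((Dn_meas hv1 hΘ (hKj j) (hg j) (hL j).continuous).ennreal_toReal).mul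
      (f.continuous.measurable.comp (N_meas hv1 (g j)))).aestronglyMeasurable
  · filter_upwards [hev] with j hj
    filter_upwards [hdiff, hden] with y hd hde
    by_cases hy : Nrm n v (fderiv ℝ (g j) y) ∈ omegaDual n C
    · have hx := hR (K j) (g j) (hKj j) (hne j) (hg j) (hcx j) y (hd j) hy
      have hyR : y ∈ Metric.closedBall (0 : Vp n v) R := by
        rw [mem_closedBall_zero_iff]
        exact (Vp_norm_le y (g j y)).trans hx
      rw [indicator_of_mem hyR, Dn_toReal hΘ (hKj j) (hg j) hy, norm_mul, norm_mul]
      have h1 : ‖(den n v (g j) y).toReal‖ ≤ facC n L := by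
        rw [Real.norm_of_nonneg ENNReal.toReal_nonneg]
        exact ENNReal.toReal_le_coe_of_le_coe (hde j)
      have h2 : ‖Θ (Gr n v (g j) y)‖ ≤ |M| := by
        refine (hM _ ⟨⟨(CDet_sub (hKj j) (Gr_mem (hg j) y)).1, hlow _ (hL j) hj y⟩, ?_⟩).trans
          (le_abs_self M)
        rw [mem_closedBall_zero_iff]; exact hx
      have h3 := f.norm_coe_le_norm (Nrm n v (fderiv ℝ (g j) y))
      gcongr
    · rw [Dn_zero hy]
      simp only [ENNReal.toReal_zero, zero_mul, norm_zero]
      apply indicator_nonneg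
      intro _ _
      positivity
  · rw [integrable_indicator_iff Metric.isClosed_closedBall.measurableSet]
    exact integrableOn_const (isCompact_closedBall _ _).measure_lt_top.ne
  · filter_upwards [hdiff, hdiff₀, den_tendsto hn hv1 hcx hcx₀ hL hL₀ hlim] with y hd hd₀ hdl
    have hNl : Tendsto (fun j => Nrm n v (fderiv ℝ (g j) y)) atTop
        (𝓝 (Nrm n v (fderiv ℝ g₀ y))) :=
      ((Nrm_cont hv1).tendsto _).comp (fderiv_tendsto hcx hcx₀ hL hL₀ hlim hd₀ hd)
    by_cases hy : Nrm n v (fderiv ℝ g₀ y) ∈ omegaDual n C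
    · have hevN : ∀ᶠ j in atTop, Nrm n v (fderiv ℝ (g j) y) ∈ omegaDual n C := by
        filter_upwards [hNl.eventually (isOpen_interior.mem_nhds hy.2)] with j hj
        exact ⟨mem_sphere_zero_iff_norm.2 (N_unit hv1 _), hj⟩
      have hGl : Tendsto (fun j => Gr n v (g j) y) atTop (𝓝 (Gr n v g₀ y)) := by
        unfold Gr
        exact tendsto_const_nhds.add ((hlim y).smul_const v)
      have hTl : Tendsto (fun j => Θ (Gr n v (g j) y)) atTop (𝓝 (Θ (Gr n v g₀ y))) := by
        have h1 := hΘ.1 _ (CDet_sub hK₀ (Gr_mem hg₀ y))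
        exact h1.tendsto.comp (tendsto_nhdsWithin_iff.2 ⟨hGl,
          Eventually.of_forall fun j => CDet_sub (hKj j) (Gr_mem (hg j) y)⟩)
      have hfl := (f.continuous.tendsto _).comp hNl
      rw [Dn_toReal hΘ hK₀ hg₀ hy]
      refine ((hdl.mul hTl).mul hfl).congr' ?_
      filter_upwards [hevN] with j hj
      rw [Dn_toReal hΘ (hKj j) (hg j) hj]
      rfl
    · have hevN : ∀ᶠ j in atTop, Nrm n v (fderiv ℝ (g j) y) ∉ omegaDual n C := by
        have hnϖ : Nrm n v (fderiv ℝ g₀ y) ∈ ϖᶜ := fun h => hy (hϖsub h)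
        filter_upwards [hNl.eventually (hϖc.isClosed.isOpen_compl.mem_nhds hnϖ)] with j hj hcon
        exact hj (normal_mem hC hϖc hϖsub (hKj j) (Gr_mem (hg j) y)
          (normals_eq hv1 (hg j) (hcx j) (hd j)) hcon)
      rw [Dn_zero hy]
      simp only [ENNReal.toReal_zero, zero_mul]
      refine tendsto_const_nhds.congr' ?_
      filter_upwards [hevN] with j hj
      rw [Dn_zero hj]
      simp
end
end

section
/- Let φ be a nonzero finite Borel measure on Ω_{C°} whose support is contained in a nonempty compact set ϖ ⊂ Ω_{C°}. Then there exists a C-pseudo-cone K ∈ K(C,ϖ) with V_K^Θ = φ. -/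
open MeasureTheory Set Filter
open scoped RealInnerProductSpace ENNReal Topology Pointwise NNReal

noncomputable section

/-! ### Part A: an abstract variational problem -/
section PartA

set_option linter.unusedSectionVars false

variable {X Y : Type*} [MetricSpace X] [CompactSpace X] [Nonempty X]
  [TopologicalSpace Y]

open scoped BoundedContinuousFunction

/-- the transform of `f` -/
def cTr (l : X → Y → ℝ) (f : X →ᵇ ℝ) (y : Y) : ℝ := ⨆ u, (f u - l u y)

lemma cTr_bdd {l : X → Y → ℝ} (hl : Continuous (Function.uncurry l)) (f : X →ᵇ ℝ) (y : Y) :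
    BddAbove (range fun u => f u - l u y) := by
  have : Continuous fun u => f u - l u y :=
    f.continuous.sub (hl.comp (by fun_prop : Continuous fun u : X => (u, y)))
  exact (isCompact_range this).bddAbove

lemma le_cTr {l : X → Y → ℝ} (hl : Continuous (Function.uncurry l)) (f : X →ᵇ ℝ) (y : Y) (u : X) :
    f u - l u y ≤ cTr l f y := le_ciSup (cTr_bdd hl f y) u

lemma exists_cTr {l : X → Y → ℝ} (hl : Continuous (Function.uncurry l)) (f : X →ᵇ ℝ) (y : Y) :
    ∃ u, cTr l f y = f u - l u y := by
  have hc : Continuous fun u => f u - l u y :=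
    f.continuous.sub (hl.comp (by fun_prop : Continuous fun u : X => (u, y)))
  obtain ⟨u, -, hu⟩ := isCompact_univ.exists_isMaxOn univ_nonempty hc.continuousOn
  exact ⟨u, le_antisymm (ciSup_le fun v => hu (mem_univ v)) (le_cTr hl f y u)⟩

lemma cTr_continuous {l : X → Y → ℝ} (hl : Continuous (Function.uncurry l)) (f : X →ᵇ ℝ) :
    Continuous (cTr l f) := by
  have := IsCompact.continuous_sSup (f := fun (y : Y) (u : X) => f u - l u y)
    (isCompact_univ (X := X)) (by
      have h2 : Continuous fun p : Y × X => l p.2 p.1 :=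
        hl.comp (by fun_prop : Continuous fun p : Y × X => (p.2, p.1))
      exact (f.continuous.comp continuous_snd).sub h2)
  simpa [cTr, iSup, image_univ] using! this

lemma cTr_le_add {l : X → Y → ℝ} (hl : Continuous (Function.uncurry l)) (f g : X →ᵇ ℝ) (y : Y) :
    cTr l f y ≤ cTr l g y + ‖f - g‖ := by
  refine ciSup_le fun u => ?_
  have h1 := le_cTr hl g y u
  have h2 := (f - g).norm_coe_le_norm u
  have h3 := le_abs_self ((f - g) u)
  rw [Real.norm_eq_abs] at h2
  simp only [BoundedContinuousFunction.coe_sub, Pi.sub_apply] at h2 h3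
  linarith

lemma cTr_abs_sub_le {l : X → Y → ℝ} (hl : Continuous (Function.uncurry l)) (f g : X →ᵇ ℝ) (y : Y) :
    |cTr l f y - cTr l g y| ≤ ‖f - g‖ := by
  rw [abs_le]
  have h1 := cTr_le_add hl f g y
  have h2 := cTr_le_add hl g f y
  rw [norm_sub_rev] at h2
  constructor <;> linarith

lemma cTr_add_const {l : X → Y → ℝ} (hl : Continuous (Function.uncurry l)) (f : X →ᵇ ℝ) (k : ℝ)
    (y : Y) : cTr l (f + BoundedContinuousFunction.const X k) y = cTr l f y + k := by
  apply le_antisymm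
  · refine ciSup_le fun u => ?_
    have := le_cTr hl f y u
    simp; linarith
  · obtain ⟨u, hu⟩ := exists_cTr hl f y
    have := le_cTr hl (f + BoundedContinuousFunction.const X k) y u
    simp at this; linarith

/-- pointwise derivative at a point of uniqueness -/
lemma cTr_hasDeriv {l : X → Y → ℝ} (hl : Continuous (Function.uncurry l)) (f h : X →ᵇ ℝ) (y : Y)
    (a : X) (ha : ∀ u, f u - l u y = cTr l f y → u = a) :
    HasDerivAt (fun t : ℝ => cTr l (f + t • h) y) (h a) 0 := by
  have haa : f a - l a y = cTr l f y := by
    obtain ⟨u, hu⟩ := exists_cTr hl f y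
    rw [← ha u hu.symm, hu]
  choose A hA using fun t : ℝ => exists_cTr hl (f + t • h) y
  have hA' : ∀ t, cTr l (f + t • h) y = f (A t) + t * h (A t) - l (A t) y := fun t => by
    rw [hA t]; simp
  have hc : Continuous fun u => f u - l u y :=
    f.continuous.sub (hl.comp (by fun_prop : Continuous fun u : X => (u, y)))
  rw [hasDerivAt_iff_isLittleO, Asymptotics.isLittleO_iff]
  intro ε hε
  -- compact set of bad maximizers
  have hcl : IsCompact {u | ε ≤ |h u - h a|} :=
    (isClosed_le continuous_const ((h.continuous.sub continuous_const).abs)).isCompact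
  have hδ : ∃ δ > 0, ∀ u, ε ≤ |h u - h a| → f u - l u y ≤ cTr l f y - δ := by
    by_cases hne : {u | ε ≤ |h u - h a|}.Nonempty
    · obtain ⟨w, hw, hwm⟩ := hcl.exists_isMaxOn hne hc.continuousOn
      refine ⟨cTr l f y - (f w - l w y), ?_, fun u hu => ?_⟩
      · have h1 := le_cTr hl f y w
        rcases h1.lt_or_eq with h1 | h1
        · linarith
        · have := ha w h1
          subst this
          simp at hw; linarith
      · have := hwm hu
        simp only [mem_ofPred_eq] at this; linarith
    · refine ⟨1, one_pos, fun u hu => (hne ⟨u, hu⟩).elim⟩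
  obtain ⟨δ, hδ, hδ'⟩ := hδ
  have hev : ∀ᶠ t : ℝ in 𝓝 0, |t| * (2 * ‖h‖) < δ := by
    have : Continuous fun t : ℝ => |t| * (2 * ‖h‖) := by fun_prop
    exact this.continuousAt.eventually_lt continuousAt_const (by simpa)
  filter_upwards [hev] with t ht
  have hb : ∀ u, |t * h u| ≤ |t| * ‖h‖ := fun u => by
    rw [abs_mul]; gcongr; exact h.norm_coe_le_norm u
  have hlow := le_cTr hl (f + t • h) y a
  simp only [BoundedContinuousFunction.coe_add, BoundedContinuousFunction.coe_smul, Pi.add_apply,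
    smul_eq_mul] at hlow
  have hup := le_cTr hl f y (A t)
  have hgood : |h (A t) - h a| < ε := by
    by_contra hcon
    have h1 := hδ' _ (not_lt.1 hcon)
    have h2 := abs_le.1 (hb (A t))
    have h3 := abs_le.1 (hb a)
    have h4 := hA' t
    linarith [h2.1, h2.2, h3.1, h3.2]
  have h0 : cTr l (f + (0:ℝ) • h) y = cTr l f y := by simp
  have e1 : 0 ≤ cTr l (f + t • h) y - cTr l f y - t * h a := by linarith
  have e2 : cTr l (f + t • h) y - cTr l f y - t * h a ≤ t * (h (A t) - h a) := by
    have := hA' t; linarith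
  rw [h0, Real.norm_eq_abs, Real.norm_eq_abs]
  simp only [sub_zero, smul_eq_mul]
  rw [abs_of_nonneg e1]
  refine e2.trans ((le_abs_self _).trans ?_)
  rw [abs_mul, mul_comm]
  gcongr

/-- double transform -/
lemma exists_dbl [CompactSpace Y] [Nonempty Y] {l : X → Y → ℝ}
    (hl : Continuous (Function.uncurry l)) (Λ : ℝ≥0)
    (hLip : ∀ y, LipschitzWith Λ (fun u => l u y)) (f : X →ᵇ ℝ) :
    ∃ g : X →ᵇ ℝ, LipschitzWith Λ g ∧ (∀ u, f u ≤ g u) ∧ ∀ y, cTr l g y ≤ cTr l f y := by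
  have hcont := cTr_continuous hl f
  have hbdd : ∀ u, BddBelow (range fun y => cTr l f y + l u y) := fun u => by
    have : Continuous fun y => cTr l f y + l u y :=
      hcont.add (hl.comp (by fun_prop : Continuous fun y : Y => (u, y)))
    exact (isCompact_range this).bddBelow
  let G : X → ℝ := fun u => ⨅ y, (cTr l f y + l u y)
  have hG : LipschitzWith Λ G := by
    refine LipschitzWith.of_le_add_mul Λ fun u v => ?_
    rw [← sub_le_iff_le_add]
    refine le_ciInf fun y => ?_
    have h1 : G u ≤ cTr l f y + l u y := ciInf_le (hbdd u) y
    have h2 := (hLip y).dist_le_mul u v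
    have h3 := le_abs_self (l u y - l v y)
    rw [Real.dist_eq] at h2
    linarith
  refine ⟨BoundedContinuousFunction.mkOfCompact ⟨G, hG.continuous⟩, hG, fun u => ?_, fun y => ?_⟩
  · refine le_ciInf fun y => ?_
    have := le_cTr hl f y u
    linarith
  · refine ciSup_le fun u => ?_
    have h1 : G u ≤ cTr l f y + l u y := ciInf_le (hbdd u) y
    simp only [BoundedContinuousFunction.mkOfCompact_apply, ContinuousMap.coe_mk]
    linarith

lemma compact_lip (Λ : ℝ≥0) (x0 : X) :
    IsCompact {f : X →ᵇ ℝ | LipschitzWith Λ f ∧ f x0 = 0} := by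
  refine BoundedContinuousFunction.arzela_ascoli₂
    (Metric.closedBall 0 (Λ * Metric.diam (univ : Set X))) (isCompact_closedBall _ _) _ ?_ ?_ ?_
  · have : {f : X →ᵇ ℝ | LipschitzWith Λ f ∧ f x0 = 0} =
        (⋂ (x : X) (y : X), {f : X →ᵇ ℝ | dist (f x) (f y) ≤ Λ * dist x y}) ∩ {f | f x0 = 0} := by
      ext f; simp [lipschitzWith_iff_dist_le_mul]
    rw [this]
    refine IsClosed.inter (isClosed_iInter fun x => isClosed_iInter fun y => ?_) ?_
    · exact isClosed_le (by fun_prop) continuous_const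
    · exact isClosed_eq (by fun_prop) continuous_const
  · intro f x hf
    have h1 := hf.1.dist_le_mul x x0
    rw [hf.2] at h1
    rw [Metric.mem_closedBall]
    refine h1.trans ?_
    gcongr
    exact Metric.dist_le_diam_of_mem isCompact_univ.isBounded (mem_univ _) (mem_univ _)
  · refine UniformEquicontinuous.equicontinuous ?_
    exact LipschitzWith.uniformEquicontinuous _ Λ fun f => f.2.1

variable [CompactSpace Y] [MeasurableSpace Y] [OpensMeasurableSpace Y]

/-- the total mass -/
def cV (l : X → Y → ℝ) (σ : Measure Y) (s : ℝ) (f : X →ᵇ ℝ) : ℝ :=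
  ∫ y, Real.exp (s * cTr l f y) ∂σ

lemma cV_integrable {l : X → Y → ℝ} (hl : Continuous (Function.uncurry l)) (σ : Measure Y)
    [IsFiniteMeasure σ] (s : ℝ) (f : X →ᵇ ℝ) :
    Integrable (fun y => Real.exp (s * cTr l f y)) σ := by
  have hc : Continuous fun y => Real.exp (s * cTr l f y) :=
    Real.continuous_exp.comp (continuous_const.mul (cTr_continuous hl f))
  obtain ⟨M, hM⟩ := (isCompact_range hc).isBounded.exists_norm_le
  exact Integrable.of_bound hc.measurable.aestronglyMeasurable M
    (ae_of_all _ fun y => hM _ ⟨y, rfl⟩)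

lemma cV_pos {l : X → Y → ℝ} (hl : Continuous (Function.uncurry l)) {σ : Measure Y}
    [IsFiniteMeasure σ] (hσ : σ ≠ 0) (s : ℝ) (f : X →ᵇ ℝ) : 0 < cV l σ s f := by
  have : NeZero σ := ⟨hσ⟩
  exact integral_exp_pos (cV_integrable hl σ s f)

lemma cV_le {l : X → Y → ℝ} (hl : Continuous (Function.uncurry l)) {σ : Measure Y}
    [IsFiniteMeasure σ] {s : ℝ} (hs : 0 < s) (f g : X →ᵇ ℝ) (k : ℝ)
    (h : ∀ y, cTr l f y ≤ cTr l g y + k) :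
    cV l σ s f ≤ Real.exp (s * k) * cV l σ s g := by
  rw [cV, cV, ← integral_const_mul]
  refine integral_mono (cV_integrable hl σ s f) ((cV_integrable hl σ s g).const_mul _) fun y => ?_
  simp only
  rw [← Real.exp_add, Real.exp_le_exp]
  nlinarith [h y]

lemma log_cV_le {l : X → Y → ℝ} (hl : Continuous (Function.uncurry l)) {σ : Measure Y}
    [IsFiniteMeasure σ] (hσ : σ ≠ 0) {s : ℝ} (hs : 0 < s) (f g : X →ᵇ ℝ) (k : ℝ)
    (h : ∀ y, cTr l f y ≤ cTr l g y + k) :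
    Real.log (cV l σ s f) ≤ s * k + Real.log (cV l σ s g) := by
  have h1 := Real.log_le_log (cV_pos hl hσ s f) (cV_le hl hs f g k h)
  rwa [Real.log_mul (Real.exp_pos _).ne' (cV_pos hl hσ s g).ne', Real.log_exp] at h1

lemma log_cV_lip {l : X → Y → ℝ} (hl : Continuous (Function.uncurry l)) {σ : Measure Y}
    [IsFiniteMeasure σ] (hσ : σ ≠ 0) {s : ℝ} (hs : 0 < s) :
    Continuous fun f : X →ᵇ ℝ => Real.log (cV l σ s f) := by
  refine (LipschitzWith.of_le_add_mul (⟨s, hs.le⟩ : ℝ≥0) fun f g => ?_).continuous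
  have := log_cV_le hl hσ hs f g ‖f - g‖ (cTr_le_add hl f g)
  rw [dist_eq_norm]
  change _ ≤ _ + s * _
  linarith

lemma cV_hasDeriv {l : X → Y → ℝ} (hl : Continuous (Function.uncurry l)) {σ : Measure Y}
    [IsFiniteMeasure σ] {s : ℝ} (hs : 0 < s) (f h : X →ᵇ ℝ) (a : Y → X)
    [MeasurableSpace X] [BorelSpace X] (ham : AEMeasurable a σ)
    (ha : ∀ᵐ y ∂σ, ∀ u, f u - l u y = cTr l f y → u = a y) :
    HasDerivAt (fun t : ℝ => cV l σ s (f + t • h))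
      (∫ y, Real.exp (s * cTr l f y) * (s * h (a y)) ∂σ) 0 := by
  obtain ⟨M, hM⟩ := (isCompact_range (cTr_continuous hl f)).isBounded.exists_norm_le
  have hM' : ∀ t ∈ Metric.ball (0:ℝ) 1, ∀ y, cTr l (f + t • h) y ≤ M + ‖h‖ := by
    intro t ht y
    have h1 := cTr_le_add hl (f + t • h) f y
    have h2 : ‖f + t • h - f‖ ≤ ‖h‖ := by
      rw [add_sub_cancel_left, norm_smul]
      simp only [Metric.mem_ball, dist_zero_right] at ht
      nlinarith [norm_nonneg h]
    have h3 := le_trans (le_abs_self _) (hM _ ⟨y, rfl⟩)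
    linarith
  refine (hasDerivAt_integral_of_dominated_loc_of_lip (s := Metric.ball (0:ℝ) 1)
    (F := fun t y => Real.exp (s * cTr l (f + t • h) y))
    (bound := fun _ => Real.exp (s * (M + ‖h‖)) * (s * ‖h‖))
    (Metric.ball_mem_nhds _ one_pos) ?_ ?_ ?_ ?_ ?_ ?_).2
  · exact Eventually.of_forall fun t => (cV_integrable hl σ s _).1
  · exact cV_integrable hl σ s _
  · refine AEStronglyMeasurable.mul ?_ ?_
    · exact (cV_integrable hl σ s _).1
    · exact ((h.continuous.measurable.comp_aemeasurable ham).const_mul s).aestronglyMeasurable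
  · refine ae_of_all _ fun y => ?_
    refine LipschitzOnWith.of_le_add_mul _ fun t ht t' ht' => ?_
    rw [Real.coe_nnabs, abs_of_nonneg (by positivity)]
    have h1 := cTr_le_add hl (f + t • h) (f + t' • h) y
    have h2 : ‖f + t • h - (f + t' • h)‖ = dist t t' * ‖h‖ := by
      rw [add_sub_add_left_eq_sub]
      have : t • h - t' • h = (t - t') • h := by ext; simp; ring
      rw [this, norm_smul, dist_eq_norm]
    rw [h2] at h1
    set p := s * cTr l (f + t • h) y with hp
    set p' := s * cTr l (f + t' • h) y with hp'
    have h3 : p - p' ≤ s * ‖h‖ * dist t t' := by rw [hp, hp']; nlinarith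
    have h4 : Real.exp p ≤ Real.exp (s * (M + ‖h‖)) := by
      rw [Real.exp_le_exp, hp]; have := hM' t ht y; gcongr
    have h5 := Real.add_one_le_exp (p' - p)
    have h6 : Real.exp p' = Real.exp p * Real.exp (p' - p) := by rw [← Real.exp_add]; ring_nf
    have h7 := Real.exp_pos p
    have h8 : Real.exp p ≤ Real.exp p' + Real.exp p * (p - p') := by rw [h6]; nlinarith
    have h9 : Real.exp p * (p - p') ≤ Real.exp p * (s * ‖h‖ * dist t t') := by gcongr
    have h10 : Real.exp p * (s * ‖h‖ * dist t t') ≤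
      Real.exp (s * (M + ‖h‖)) * (s * ‖h‖ * dist t t') := by gcongr
    linarith
  · exact integrable_const _
  · filter_upwards [ha] with y hy
    have h1 := cTr_hasDeriv hl f h y (a y) hy
    have h2 := (h1.const_mul s).exp
    simpa using! h2

/-- Main abstract result. -/
theorem abstract_main {l : X → Y → ℝ} (hl : Continuous (Function.uncurry l)) (Λ : ℝ≥0)
    (hLip : ∀ y, LipschitzWith Λ (fun u => l u y)) {σ : Measure Y}
    [IsFiniteMeasure σ] (hσ : σ ≠ 0) {s : ℝ} (hs : 0 < s)
    [MeasurableSpace X] [BorelSpace X] (φ : Measure X) [IsFiniteMeasure φ] (hφ : φ ≠ 0) :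
    ∃ f : X →ᵇ ℝ, ∀ a : Y → X, AEMeasurable a σ →
      (∀ᵐ y ∂σ, ∀ u, f u - l u y = cTr l f y → u = a y) → ∀ h : X →ᵇ ℝ,
      ∫ x, h x ∂φ = ∫ y, Real.exp (s * cTr l f y) * h (a y) ∂σ := by
  have : Nonempty Y := by
    by_contra hcon
    rw [not_nonempty_iff] at hcon
    exact hσ (Measure.eq_zero_of_isEmpty σ)
  have : NeZero φ := ⟨hφ⟩
  set m : ℝ := φ.real univ with hm
  have hmpos : 0 < m := by
    rw [hm]; exact measureReal_univ_pos
  let J : (X →ᵇ ℝ) → ℝ := fun f => ∫ x, f x ∂φ - m / s * Real.log (cV l σ s f)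
  have hIntg : ∀ f : X →ᵇ ℝ, Integrable f φ := fun f => f.integrable φ
  have hJc : Continuous J := by
    refine Continuous.sub ?_ (continuous_const.mul (log_cV_lip hl hσ hs))
    refine (LipschitzWith.of_le_add_mul (⟨m, hmpos.le⟩ : ℝ≥0) fun f g => ?_).continuous
    have : ∫ x, f x ∂φ ≤ ∫ x, (g x + dist f g) ∂φ := by
      refine integral_mono (hIntg f) ((hIntg g).add (integrable_const _)) fun x => ?_
      have := BoundedContinuousFunction.dist_coe_le_dist (f := f) (g := g) x
      rw [Real.dist_eq] at this
      have h3 := le_abs_self (f x - g x)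
      simp only; linarith
    rw [integral_add (hIntg g) (integrable_const _), integral_const, smul_eq_mul] at this
    exact this
  have hVc : ∀ f k, cV l σ s (f + BoundedContinuousFunction.const X k) =
      Real.exp (s * k) * cV l σ s f := fun f k => by
    rw [cV, cV, ← integral_const_mul]
    congr 1; ext y
    rw [cTr_add_const hl, ← Real.exp_add]; ring_nf
  have hJs : ∀ f k, J (f + BoundedContinuousFunction.const X k) = J f := fun f k => by
    simp only [J]
    rw [hVc, Real.log_mul (Real.exp_pos _).ne' (cV_pos hl hσ s f).ne', Real.log_exp]
    have : ∫ x, (f + BoundedContinuousFunction.const X k) x ∂φ = ∫ x, f x ∂φ + m * k := by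
      simp only [BoundedContinuousFunction.coe_add, Pi.add_apply,
        BoundedContinuousFunction.const_apply]
      rw [integral_add (hIntg f) (integrable_const _), integral_const, smul_eq_mul]
    rw [this]; field_simp; ring
  obtain ⟨x0⟩ := ‹Nonempty X›
  obtain ⟨f0, hf0, hmax⟩ := (compact_lip Λ x0).exists_isMaxOn
    ⟨0, (LipschitzWith.const' (0:ℝ)), rfl⟩ hJc.continuousOn
  have hglob : ∀ f, J f ≤ J f0 := by
    intro f
    obtain ⟨g, hg1, hg2, hg3⟩ := exists_dbl hl Λ hLip f
    have h1 : J f ≤ J g := by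
      have e1 : ∫ x, f x ∂φ ≤ ∫ x, g x ∂φ := integral_mono (hIntg f) (hIntg g) hg2
      have e2 := log_cV_le hl hσ hs g f 0 (by simpa using hg3)
      have e3 : m / s * Real.log (cV l σ s g) ≤ m / s * Real.log (cV l σ s f) := by
        refine mul_le_mul_of_nonneg_left ?_ (by positivity)
        linarith
      simp only [J]; linarith
    rw [← hJs g (-g x0)] at h1
    refine h1.trans (hmax ⟨?_, by simp⟩)
    have : LipschitzWith (Λ + 0) fun x => g x + (-g x0) := hg1.add (LipschitzWith.const _)
    simpa using! this
  set k := (Real.log m - Real.log (cV l σ s f0)) / s with hk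
  set f := f0 + BoundedContinuousFunction.const X k with hf
  have hVf : cV l σ s f = m := by
    rw [hf, hVc, hk, mul_div_cancel₀ _ hs.ne', Real.exp_sub, Real.exp_log hmpos,
      Real.exp_log (cV_pos hl hσ s f0), div_mul_cancel₀ _ (cV_pos hl hσ s f0).ne']
  refine ⟨f, fun a ham ha h => ?_⟩
  have hd := cV_hasDeriv hl hs f h a ham ha
  have h0 : cV l σ s (f + (0:ℝ) • h) = m := by simpa using hVf
  have hd2 := hd.log (by rw [h0]; exact hmpos.ne')
  have hd3 : HasDerivAt (fun t : ℝ => ∫ x, (f + t • h) x ∂φ) (∫ x, h x ∂φ) 0 := by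
    have : (fun t : ℝ => ∫ x, (f + t • h) x ∂φ) = fun t => ∫ x, f x ∂φ + t * ∫ x, h x ∂φ := by
      ext t
      rw [← integral_const_mul, ← integral_add (hIntg f) ((hIntg h).const_mul t)]
      simp
    rw [this]
    simpa using! ((hasDerivAt_id (0:ℝ)).mul_const (∫ x, h x ∂φ)).const_add (∫ x, f x ∂φ)
  have hd4 := hd3.sub (hd2.const_mul (m / s))
  have hloc : IsLocalMax (fun t : ℝ => J (f + t • h)) 0 := by
    refine Eventually.of_forall fun t => ?_
    simp only [zero_smul, add_zero]
    rw [hf, hJs f0 k]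
    exact hglob _
  have := hloc.hasDerivAt_eq_zero hd4
  rw [h0] at this
  have e : ∫ y, Real.exp (s * cTr l f y) * (s * h (a y)) ∂σ
      = s * ∫ y, Real.exp (s * cTr l f y) * h (a y) ∂σ := by
    rw [← integral_const_mul]; congr 1; ext y; ring
  rw [e] at this
  have e2 : ∀ Z : ℝ, m / s * (s * Z / m) = Z := fun Z => by field_simp
  rw [e2] at this
  linarith

end PartA

/-! ### Part B: cone geometry -/
section PartB

set_option linter.unusedSectionVars false

open scoped BoundedContinuousFunction

variable {n : ℕ} {C : Set (En n)} {ϖ : Set (En n)}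

lemma inner_neg_of_dual {u y : En n} (hu : u ∈ interior (dualCone n C)) (hy : y ∈ C) (hy0 : y ≠ 0) :
    ⟪y, u⟫ < 0 := by
  have h1 : Tendsto (fun t : ℝ => u + t • y) (𝓝[>] 0) (𝓝 u) := by
    have : ContinuousAt (fun t : ℝ => u + t • y) 0 := by fun_prop
    have h2 := this.tendsto
    simp only [zero_smul, add_zero] at h2
    exact h2.mono_left nhdsWithin_le_nhds
  have h2 := h1.eventually (mem_interior_iff_mem_nhds.1 hu)
  obtain ⟨t, ht, ht0⟩ := (h2.and self_mem_nhdsWithin).exists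
  have ht0 : 0 < t := ht0
  have h3 := ht y hy
  rw [inner_add_left, inner_smul_left, real_inner_self_eq_norm_sq] at h3
  have h4 : 0 < ‖y‖ := norm_pos_iff.2 hy0
  rw [real_inner_comm]
  simp only [conj_trivial] at h3
  have : 0 < t * ‖y‖ ^ 2 := by positivity
  linarith

lemma lower_bound (hC : IsGoodCone n C) (hϖc : IsCompact ϖ) (hϖsub : ϖ ⊆ omegaDual n C) :
    ∃ m > 0, ∀ u ∈ ϖ, ∀ v ∈ C, ‖v‖ = 1 → m ≤ -⟪v, u⟫ := by
  have hk : IsCompact (ϖ ×ˢ (Metric.sphere (0 : En n) 1 ∩ C)) :=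
    hϖc.prod ((isCompact_sphere 0 1).inter_right hC.1)
  have hc : ContinuousOn (fun z : En n × En n => -⟪z.2, z.1⟫) (ϖ ×ˢ (Metric.sphere (0 : En n) 1 ∩ C)) := by
    fun_prop
  obtain ⟨m, hm, h⟩ := hk.exists_forall_le' hc (a := 0) (by
    rintro ⟨u, v⟩ ⟨hu, hv⟩
    have := inner_neg_of_dual (hϖsub hu).2 hv.2 (by
      rintro h; have := hv.1; rw [h] at this; simp at this)
    simp only
    linarith)
  exact ⟨m, hm, fun u hu v hv hv1 => h (u, v) ⟨hu, by simpa using hv1, hv⟩⟩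

/-- The concave gauge. -/
def pF (ϖ : Set (En n)) (f : ϖ →ᵇ ℝ) (y : En n) : ℝ :=
  ⨅ u : ϖ, Real.exp (-f u) * (-⟪y, (u : En n)⟫)

/-- The a.e. defined normal. -/
def nrm (ϖ : Set (En n)) (f : ϖ →ᵇ ℝ) (y : En n) : En n :=
  -(‖gradient (pF ϖ f) y‖⁻¹ • gradient (pF ϖ f) y)

variable [CompactSpace ϖ] [Nonempty ϖ] (f : ϖ →ᵇ ℝ)

lemma pF_cont (y : En n) : Continuous fun u : ϖ => Real.exp (-f u) * (-⟪y, (u : En n)⟫) := by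
  fun_prop

lemma pF_le (y : En n) (u : ϖ) : pF ϖ f y ≤ Real.exp (-f u) * (-⟪y, (u : En n)⟫) :=
  ciInf_le (isCompact_range (pF_cont f y)).bddBelow u

lemma exists_pF (y : En n) : ∃ u : ϖ, pF ϖ f y = Real.exp (-f u) * (-⟪y, (u : En n)⟫) := by
  obtain ⟨u, -, hu⟩ := isCompact_univ.exists_isMinOn univ_nonempty (pF_cont f y).continuousOn
  exact ⟨u, le_antisymm (pF_le f y u) (le_ciInf fun v => hu (mem_univ v))⟩

lemma pF_smul {t : ℝ} (ht : 0 < t) (y : En n) : pF ϖ f (t • y) = t * pF ϖ f y := by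
  rw [pF, pF, Real.mul_iInf_of_nonneg ht.le]
  congr 1; ext u
  rw [inner_smul_left]; simp; ring

lemma pF_pos (hϖsub : ϖ ⊆ omegaDual n C) {y : En n} (hy : y ∈ C) (hy0 : y ≠ 0) : 0 < pF ϖ f y := by
  obtain ⟨u, hu⟩ := exists_pF f y
  rw [hu]
  have := inner_neg_of_dual (hϖsub u.2).2 hy hy0
  exact mul_pos (Real.exp_pos _) (by linarith)

lemma pF_lip (h1 : ∀ u ∈ ϖ, ‖u‖ = 1) : LipschitzWith (Real.exp ‖f‖).toNNReal (pF ϖ f) := by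
  refine LipschitzWith.of_le_add_mul _ fun x y => ?_
  rw [Real.coe_toNNReal _ (Real.exp_pos _).le]
  obtain ⟨u, hu⟩ := exists_pF f y
  have h2 := pF_le f x u
  rw [hu]
  refine h2.trans ?_
  have h3 : ⟪y - x, (u : En n)⟫ ≤ dist x y := by
    refine (real_inner_le_norm _ _).trans ?_
    rw [h1 u u.2, mul_one, dist_comm, dist_eq_norm]
  have h4 : Real.exp (-f u) ≤ Real.exp ‖f‖ := by
    rw [Real.exp_le_exp]
    have := f.norm_coe_le_norm u
    exact (neg_le_abs _).trans this
  rw [inner_sub_left] at h3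
  have h5 : Real.exp (-f u) * (⟪y, (u : En n)⟫ - ⟪x, (u : En n)⟫) ≤ Real.exp ‖f‖ * dist x y := by
    refine (mul_le_mul_of_nonneg_left h3 (Real.exp_pos _).le).trans ?_
    gcongr
  linarith

lemma pF_diff_smul {t : ℝ} (ht : 0 < t) {y : En n} (h : DifferentiableAt ℝ (pF ϖ f) y) :
    DifferentiableAt ℝ (pF ϖ f) (t • y) := by
  have e : pF ϖ f = fun z => t * pF ϖ f (t⁻¹ • z) := by
    ext z
    rw [← pF_smul f ht, smul_smul, mul_inv_cancel₀ ht.ne', one_smul]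
  have h2 : DifferentiableAt ℝ (pF ϖ f) (t⁻¹ • (t • y)) := by
    rwa [smul_smul, inv_mul_cancel₀ ht.ne', one_smul]
  rw [e]
  refine DifferentiableAt.const_mul ?_ t
  exact DifferentiableAt.fun_comp' (t • y) h2 (by fun_prop)

lemma grad_eq {y : En n} (h : DifferentiableAt ℝ (pF ϖ f) y) {u : ϖ}
    (hu : pF ϖ f y = Real.exp (-f u) * (-⟪y, (u : En n)⟫)) :
    gradient (pF ϖ f) y = -(Real.exp (-f u) • (u : En n)) := by
  have hg := h.hasGradientAt.hasFDerivAt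
  set G := gradient (pF ϖ f) y with hG
  set w : En n := -(Real.exp (-f u) • (u : En n)) with hw
  have hwz : ∀ z, ⟪w, z⟫ = Real.exp (-f u) * (-⟪z, (u : En n)⟫) := fun z => by
    rw [hw, inner_neg_left, inner_smul_left, real_inner_comm]; simp
  have hlin : HasFDerivAt (fun z : En n => ⟪w, z⟫) (innerSL ℝ w) y := (innerSL ℝ w).hasFDerivAt
  have hd := hlin.sub hg
  have hmin : IsLocalMin ((fun z : En n => ⟪w, z⟫) - pF ϖ f) y := by
    refine Eventually.of_forall fun z => ?_
    simp only [Pi.sub_apply, hwz]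
    have := pF_le f z u
    linarith
  have h0 := hmin.hasFDerivAt_eq_zero hd
  have h1 := congrArg (fun L => L (w - G)) h0
  simp only [_root_.sub_apply, innerSL_apply_apply, InnerProductSpace.toDual_apply_apply,
    _root_.zero_apply] at h1
  rw [← inner_sub_left, inner_self_eq_zero] at h1
  exact (sub_eq_zero.1 h1).symm

lemma nrm_eq (h1 : ∀ u ∈ ϖ, ‖u‖ = 1) {y : En n} (h : DifferentiableAt ℝ (pF ϖ f) y) {u : ϖ}
    (hu : pF ϖ f y = Real.exp (-f u) * (-⟪y, (u : En n)⟫)) : nrm ϖ f y = u := by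
  rw [nrm, grad_eq f h hu, norm_neg, norm_smul, h1 u u.2, mul_one, Real.norm_eq_abs,
    abs_of_pos (Real.exp_pos _), smul_neg, neg_neg, smul_smul,
    inv_mul_cancel₀ (Real.exp_pos _).ne', one_smul]

lemma nrm_smul (h1 : ∀ u ∈ ϖ, ‖u‖ = 1) {y : En n} (h : DifferentiableAt ℝ (pF ϖ f) y)
    {t : ℝ} (ht : 0 < t) : nrm ϖ f (t • y) = nrm ϖ f y := by
  obtain ⟨u, hu⟩ := exists_pF f y
  rw [nrm_eq f h1 h hu, nrm_eq f h1 (pF_diff_smul f ht h) (u := u)]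
  rw [pF_smul f ht, hu, inner_smul_left]; simp; ring

lemma nrm_measurable : Measurable (nrm ϖ f) := by
  have : Measurable (gradient (pF ϖ f)) :=
    (InnerProductSpace.toDual ℝ (En n)).symm.continuous.measurable.comp (measurable_fderiv ℝ (pF ϖ f))
  exact ((this.norm.inv).smul this).neg

/-- the pseudo-cone -/
def Kf (C : Set (En n)) (ϖ : Set (En n)) (f : ϖ →ᵇ ℝ) : Set (En n) := C ∩ {y | 1 ≤ pF ϖ f y}

lemma mem_Kf {y : En n} : y ∈ Kf C ϖ f ↔ y ∈ C ∧ ∀ u : ϖ, ⟪y, (u : En n)⟫ ≤ -Real.exp (f u) := by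
  have key : ∀ u : ϖ, 1 ≤ Real.exp (-f u) * (-⟪y, (u : En n)⟫) ↔ ⟪y, (u : En n)⟫ ≤ -Real.exp (f u) := by
    intro u
    rw [Real.exp_neg, inv_mul_eq_div, one_le_div (Real.exp_pos _), le_neg]
  refine and_congr_right fun _ => ?_
  simp only [← key]
  constructor
  · exact fun h u => le_trans h (pF_le f y u)
  · intro h
    obtain ⟨u, hu⟩ := exists_pF f y
    simp only [mem_ofPred_eq]
    rw [hu]; exact h u

lemma cone_add (hC : IsGoodCone n C) {x y : En n} (hx : x ∈ C) (hy : y ∈ C) : x + y ∈ C := by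
  have h := hC.2.1 hx hy (by norm_num : (0:ℝ) ≤ 1/2) (by norm_num : (0:ℝ) ≤ 1/2) (by norm_num)
  have h2 := hC.2.2.1 _ h 2 (by norm_num)
  rwa [smul_add, smul_smul, smul_smul, show (2:ℝ) * (1/2) = 1 by norm_num, one_smul, one_smul] at h2

lemma int_smul (hC : IsGoodCone n C) {x : En n} (hx : x ∈ interior C) {t : ℝ} (ht : 0 < t) :
    t • x ∈ interior C := by
  have h1 : t • C ⊆ C := by
    rintro _ ⟨y, hy, rfl⟩; exact hC.2.2.1 y hy t ht.le
  have h2 := interior_mono h1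
  rw [interior_smul₀ ht.ne'] at h2
  exact h2 (smul_mem_smul_set hx)

lemma exists_int_ne (hn : 2 ≤ n) (hC : IsGoodCone n C) : ∃ x ∈ interior C, x ≠ 0 := by
  have : Nontrivial (En n) := by
    have : Nonempty (Fin n) := ⟨⟨0, by omega⟩⟩
    infer_instance
  by_contra! hcon
  obtain ⟨x, hx⟩ := hC.2.2.2.2
  have h0 := hcon x hx
  have : interior C = {0} := by
    ext z; constructor
    · intro hz; exact hcon z hz
    · rintro rfl; rwa [← h0]
  have h3 : IsOpen ({0} : Set (En n)) := this ▸ isOpen_interior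
  exact not_isOpen_singleton (0 : En n) h3

lemma Kf_det (hn : 2 ≤ n) (hC : IsGoodCone n C) (hϖsub : ϖ ⊆ omegaDual n C) :
    CDetermined n C ϖ (Kf C ϖ f) := by
  have h1 : ∀ u ∈ ϖ, ‖u‖ = 1 := fun u hu => by simpa using (hϖsub hu).1
  have hcont : Continuous (pF ϖ f) := (pF_lip f h1).continuous
  have hne : (Kf C ϖ f).Nonempty := by
    obtain ⟨x, hx, hx0⟩ := exists_int_ne hn hC
    have hx := interior_subset hx
    have hp := pF_pos f hϖsub hx hx0
    refine ⟨(pF ϖ f x)⁻¹ • x, hC.2.2.1 x hx _ (inv_pos.2 hp).le, ?_⟩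
    simp only [mem_ofPred_eq]
    rw [pF_smul f (inv_pos.2 hp), inv_mul_cancel₀ hp.ne']
  refine ⟨⟨⟨hne, ?_, ?_, ?_, ?_⟩, ?_⟩, ?_⟩
  · exact hC.1.inter (isClosed_le continuous_const hcont)
  · intro x hx y hy a b ha hb hab
    rw [mem_Kf] at hx hy ⊢
    refine ⟨hC.2.1 hx.1 hy.1 ha hb hab, fun u => ?_⟩
    rw [inner_add_left, inner_smul_left, inner_smul_left]
    have e1 := mul_le_mul_of_nonneg_left (hx.2 u) ha
    have e2 := mul_le_mul_of_nonneg_left (hy.2 u) hb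
    simp only [conj_trivial]
    have : a * -Real.exp (f u) + b * -Real.exp (f u) = -Real.exp (f u) := by
      rw [← add_mul, hab, one_mul]
    linarith
  · intro h0
    rw [mem_Kf] at h0
    obtain ⟨u⟩ := ‹Nonempty ϖ›
    have := h0.2 u
    rw [inner_zero_left] at this
    linarith [Real.exp_pos (f u)]
  · rintro t ht _ ⟨x, hx, rfl⟩
    refine ⟨hC.2.2.1 x hx.1 t (by linarith), ?_⟩
    have h2 : 1 ≤ pF ϖ f x := hx.2
    simp only [mem_ofPred_eq]
    rw [pF_smul f (by linarith)]
    nlinarith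
  · ext z
    constructor
    · intro hz
      obtain ⟨x, hx⟩ := hne
      have hmem : ∀ k : ℕ, ((k:ℝ) + 1)⁻¹ • x + z ∈ C := fun k => by
        have h2 := (hz x hx ((k:ℝ) + 1) (by positivity)).1
        have h3 := hC.2.2.1 _ h2 ((k:ℝ) + 1)⁻¹ (by positivity)
        rwa [smul_add, smul_smul, inv_mul_cancel₀ (by positivity), one_smul] at h3
      have hlim : Tendsto (fun k : ℕ => ((k:ℝ) + 1)⁻¹ • x + z) atTop (𝓝 ((0:ℝ) • x + z)) := by
        refine Tendsto.add_const _ (Tendsto.smul_const ?_ _)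
        simpa using tendsto_one_div_add_atTop_nhds_zero_nat (𝕜 := ℝ)
      rw [zero_smul, zero_add] at hlim
      exact hC.1.mem_of_tendsto hlim (Eventually.of_forall hmem)
    · intro hz x hx t ht
      have htz := hC.2.2.1 z hz t ht
      rw [mem_Kf] at hx ⊢
      refine ⟨cone_add hC hx.1 htz, fun u => ?_⟩
      rw [inner_add_left]
      have h2 : ⟪t • z, (u : En n)⟫ ≤ 0 := by
        rw [real_inner_comm]
        exact interior_subset (hϖsub u.2).2 _ htz
      linarith [hx.2 u]
  · ext x
    simp only [mem_inter_iff, mem_iInter, mem_ofPred_eq]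
    constructor
    · intro hx
      refine ⟨hx.1, fun u hu => ?_⟩
      refine le_csSup ⟨-Real.exp (f ⟨u, hu⟩), ?_⟩ ⟨x, hx, rfl⟩
      rintro _ ⟨y, hy, rfl⟩
      exact ((mem_Kf f).1 hy).2 ⟨u, hu⟩
    · intro hx
      rw [mem_Kf]
      refine ⟨hx.1, fun u => (hx.2 u u.2).trans ?_⟩
      refine csSup_le (hne.image _) ?_
      rintro _ ⟨y, hy, rfl⟩
      exact ((mem_Kf f).1 hy).2 u

lemma normals_Kf (hϖsub : ϖ ⊆ omegaDual n C) {x : En n}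
    (hx : x ∈ interior C) (hp : pF ϖ f x = 1) (hd : DifferentiableAt ℝ (pF ϖ f) x) :
    normalsAt n (Kf C ϖ f) x = {nrm ϖ f x} := by
  have h1 : ∀ u ∈ ϖ, ‖u‖ = 1 := fun u hu => by simpa using (hϖsub hu).1
  obtain ⟨u, hu⟩ := exists_pF f x
  rw [nrm_eq f h1 hd hu]
  have hgr := grad_eq f hd hu
  ext v
  simp only [mem_singleton_iff]
  constructor
  · rintro ⟨hv1, hv⟩
    -- directions
    have hdir : ∀ d : En n, ⟪d, (u : En n)⟫ < 0 → ⟪d, v⟫ ≤ 0 := by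
      intro d hdu
      have hg := hd.hasGradientAt.hasFDerivAt
      have hline : HasDerivAt (fun t : ℝ => x + t • d) d 0 := by
        simpa using! ((hasDerivAt_id (0:ℝ)).smul_const d).const_add x
      have hg' : HasFDerivAt (pF ϖ f) (InnerProductSpace.toDual ℝ (En n) (gradient (pF ϖ f) x)) (x + (0:ℝ) • d) := by
        simpa using hg
      have hcomp := hg'.comp_hasDerivAt (0:ℝ) hline
      rw [InnerProductSpace.toDual_apply_apply, hgr, inner_neg_left, inner_smul_left] at hcomp
      have hpos : 0 < -((starRingEnd ℝ) (Real.exp (-f u)) * ⟪(u : En n), d⟫) := by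
        rw [real_inner_comm]
        simp only [conj_trivial]
        nlinarith [Real.exp_pos (-f u)]
      have hgt : ∀ᶠ t : ℝ in 𝓝[>] 0, 1 < pF ϖ f (x + t • d) := by
        have hs := hcomp.hasDerivWithinAt (s := Ioi (0:ℝ))
        rw [hasDerivWithinAt_iff_tendsto_slope] at hs
        have := hs.eventually (lt_mem_nhds hpos)
        rw [sdiff_singleton_eq_self (by simp)] at this
        filter_upwards [this, self_mem_nhdsWithin] with t ht ht0
        have ht0 : 0 < t := ht0
        rw [slope_def_field] at ht
        simp only [Function.comp, zero_smul, add_zero, sub_zero, hp] at ht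
        have := (div_pos_iff_of_pos_right ht0).1 ht
        linarith
      have hin : ∀ᶠ t : ℝ in 𝓝[>] 0, x + t • d ∈ C := by
        have : ContinuousAt (fun t : ℝ => x + t • d) 0 := by fun_prop
        have h2 := this.tendsto
        simp only [zero_smul, add_zero] at h2
        exact (h2.mono_left nhdsWithin_le_nhds).eventually (mem_interior_iff_mem_nhds.1 hx)
      obtain ⟨t, ⟨ht1, ht2⟩, ht0⟩ := ((hgt.and hin).and self_mem_nhdsWithin).exists
      have ht0 : 0 < t := ht0
      have h3 := hv _ ⟨ht2, ht1.le⟩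
      rw [inner_add_left, inner_smul_left] at h3
      simp only [conj_trivial] at h3
      by_contra hc
      have := mul_pos ht0 (not_le.1 hc)
      linarith
    have hu1 := h1 u u.2
    by_contra hne
    have hvu : ⟪v, (u : En n)⟫ < 1 := by
      have := inner_lt_one_iff_real_of_norm_eq_one hv1 hu1
      exact this.2 hne
    have h5 := hdir (v - (u : En n)) (by
      rw [inner_sub_left, real_inner_self_eq_norm_sq, hu1]; linarith)
    rw [inner_sub_left, real_inner_self_eq_norm_sq, hv1, real_inner_comm] at h5
    linarith
  · rintro rfl
    refine ⟨h1 u u.2, fun y hy => ?_⟩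
    have h2 : 1 ≤ pF ϖ f y := hy.2
    have h3 := h2.trans (pF_le f y u)
    rw [← hp, hu] at h3
    have := (mul_le_mul_iff_right₀ (Real.exp_pos (-f u))).1 h3
    linarith

/-- the measurable model of the union of segments -/
def Tset (C : Set (En n)) (ϖ : Set (En n)) (f : ϖ →ᵇ ℝ) (ω : Set (En n)) : Set (En n) :=
  {y | y ∈ interior C ∧ y ≠ 0 ∧ pF ϖ f y ≤ 1 ∧ nrm ϖ f (‖y‖⁻¹ • y) ∈ ω}

lemma Tset_meas (hϖsub : ϖ ⊆ omegaDual n C) {ω : Set (En n)} (hω : MeasurableSet ω) :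
    MeasurableSet (Tset C ϖ f ω) := by
  have h1 : ∀ u ∈ ϖ, ‖u‖ = 1 := fun u hu => by simpa using (hϖsub hu).1
  have hcont : Continuous (pF ϖ f) := (pF_lip f h1).continuous
  have hm : Measurable fun y : En n => nrm ϖ f (‖y‖⁻¹ • y) :=
    (nrm_measurable f).comp (by fun_prop)
  exact isOpen_interior.measurableSet.inter ((measurableSet_singleton (0 : En n)).compl.inter
    ((measurableSet_le hcont.measurable measurable_const).inter (hm hω)))

lemma segs_ae_eq (hC : IsGoodCone n C) (hϖsub : ϖ ⊆ omegaDual n C) (ω : Set (En n)) (hn : 2 ≤ n) :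
    (⋃ x ∈ nuInv n (Kf C ϖ f) ω, segment ℝ (0 : En n) x) =ᵐ[volume] Tset C ϖ f ω := by
  have : Nontrivial (En n) := by
    have : Nonempty (Fin n) := ⟨⟨0, by omega⟩⟩
    infer_instance
  have h1 : ∀ u ∈ ϖ, ‖u‖ = 1 := fun u hu => by simpa using (hϖsub hu).1
  have hcont : Continuous (pF ϖ f) := (pF_lip f h1).continuous
  have hdiff := (pF_lip f h1).ae_differentiableAt (μ := volume)
  have hfr : ∀ᵐ y : En n, y ∉ frontier C := measure_eq_zero_iff_ae_notMem.1 (hC.2.1.addHaar_frontier volume)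
  have h0 : ∀ᵐ y : En n, y ≠ 0 := by
    simp [ae_iff]
  have hKcl : IsClosed (Kf C ϖ f) := hC.1.inter (isClosed_le continuous_const hcont)
  filter_upwards [hdiff, hfr, h0] with y hd hy hy0
  refine propext ?_
  change y ∈ (⋃ x ∈ nuInv n (Kf C ϖ f) ω, segment ℝ (0 : En n) x) ↔ y ∈ Tset C ϖ f ω
  simp only [mem_iUnion, exists_prop]
  have hyn : 0 < ‖y‖⁻¹ := inv_pos.2 (norm_pos_iff.2 hy0)
  rw [show y ∈ Tset C ϖ f ω ↔ (y ∈ interior C ∧ y ≠ 0 ∧ pF ϖ f y ≤ 1 ∧ nrm ϖ f (‖y‖⁻¹ • y) ∈ ω) from Iff.rfl,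
    nrm_smul f h1 hd hyn]
  constructor
  · rintro ⟨x, ⟨hxf, w, hw, hxw⟩, hyx⟩
    have hxK : x ∈ Kf C ϖ f := hKcl.frontier_subset hxf
    rw [segment_eq_image] at hyx
    obtain ⟨t, ⟨ht0, ht1⟩, rfl⟩ := hyx
    simp only [smul_zero, zero_add] at *
    have htpos : 0 < t := by
      rcases ht0.lt_or_eq with h | h
      · exact h
      · subst h; simp at hy0
    have hyC : t • x ∈ C := hC.2.2.1 x hxK.1 t ht0
    have hyI : t • x ∈ interior C := by
      by_contra hcon
      exact hy ⟨subset_closure hyC, hcon⟩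
    have hxI : x ∈ interior C := by
      have := int_smul hC hyI (inv_pos.2 htpos)
      rwa [smul_smul, inv_mul_cancel₀ htpos.ne', one_smul] at this
    have hdx : DifferentiableAt ℝ (pF ϖ f) x := by
      have := pF_diff_smul f (inv_pos.2 htpos) hd
      rwa [smul_smul, inv_mul_cancel₀ htpos.ne', one_smul] at this
    have hpx : pF ϖ f x = 1 := by
      refine le_antisymm ?_ hxK.2
      by_contra hcon
      refine hxf.2 ?_
      rw [mem_interior]
      exact ⟨interior C ∩ {z | 1 < pF ϖ f z}, fun z hz => ⟨interior_subset hz.1, (show 1 < pF ϖ f z from hz.2).le⟩,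
        isOpen_interior.inter (isOpen_lt continuous_const hcont), hxI, not_le.1 hcon⟩
    refine ⟨hyI, hy0, ?_, ?_⟩
    · rw [pF_smul f htpos, hpx]; linarith
    · rw [nrm_smul f h1 hdx htpos]
      rw [normals_Kf f hϖsub hxI hpx hdx] at hxw
      rw [singleton_eq_singleton_iff.1 hxw]; exact hw
  · rintro ⟨hyI, -, hp1, hω⟩
    have hp := pF_pos f hϖsub (interior_subset hyI) hy0
    have hpi := inv_pos.2 hp
    set x := (pF ϖ f y)⁻¹ • y with hx
    have hxI : x ∈ interior C := int_smul hC hyI hpi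
    have hdx : DifferentiableAt ℝ (pF ϖ f) x := pF_diff_smul f hpi hd
    have hpx : pF ϖ f x = 1 := by rw [hx, pF_smul f hpi, inv_mul_cancel₀ hp.ne']
    have hxK : x ∈ Kf C ϖ f := ⟨interior_subset hxI, hpx.ge⟩
    refine ⟨x, ⟨⟨subset_closure hxK, ?_⟩, nrm ϖ f y, hω, ?_⟩, ?_⟩
    · intro hIntg
      have h2 : Tendsto (fun t : ℝ => t • x) (𝓝[<] 1) (𝓝 x) := by
        have : ContinuousAt (fun t : ℝ => t • x) 1 := by fun_prop
        have h2 := this.tendsto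
        simp only [one_smul] at h2
        exact h2.mono_left nhdsWithin_le_nhds
      have h3 := h2.eventually (mem_interior_iff_mem_nhds.1 hIntg)
      have h4 : ∀ᶠ t : ℝ in 𝓝[<] 1, t ∈ Ioo (0:ℝ) 1 := Ioo_mem_nhdsLT one_pos
      obtain ⟨t, ht1, ht2⟩ := (h3.and h4).exists
      have h5 : 1 ≤ pF ϖ f (t • x) := ht1.2
      rw [pF_smul f ht2.1, hpx] at h5
      linarith [ht2.2]
    · rw [normals_Kf f hϖsub hxI hpx hdx, hx, nrm_smul f h1 hd hpi]
    · rw [segment_eq_image]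
      refine ⟨pF ϖ f y, ⟨hp.le, hp1⟩, ?_⟩
      simp only [smul_zero, zero_add]
      rw [hx, smul_smul, mul_inv_cancel₀ hp.ne', one_smul]

end PartB

/-! ### Part C: polar coordinates and conclusion -/
section PartC

set_option linter.unusedSectionVars false

open scoped BoundedContinuousFunction

lemma polar_lintegral (n : ℕ) (F : En n → ℝ≥0∞) (hF : Measurable F) (hn : 2 ≤ n) :
    ∫⁻ y, F y = ∫⁻ v, (∫⁻ r in Ioi (0:ℝ), ENNReal.ofReal (r ^ (n - 1)) * F (r • (v : En n)))
      ∂((volume : Measure (En n)).toSphere) := by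
  have : Nontrivial (En n) := by
    have : Nonempty (Fin n) := ⟨⟨0, by omega⟩⟩
    infer_instance
  have hmp := (volume : Measure (En n)).measurePreserving_homeomorphUnitSphereProd
  rw [finrank_euclideanSpace_fin] at hmp
  have hms : Measurable fun p : (Metric.sphere (0 : En n) 1) × Ioi (0:ℝ) => F ((p.2 : ℝ) • (p.1 : En n)) :=
    hF.comp (by fun_prop)
  calc ∫⁻ y, F y = ∫⁻ y in ({0}ᶜ : Set (En n)), F y := by rw [restrict_compl_singleton]
    _ = ∫⁻ y : ({0}ᶜ : Set (En n)), F y ∂((volume : Measure (En n)).comap (Subtype.val : ({0}ᶜ : Set (En n)) → En n)) :=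
        (lintegral_subtype_comap (measurableSet_singleton _).compl _).symm
    _ = ∫⁻ y : ({0}ᶜ : Set (En n)), (fun p : (Metric.sphere (0 : En n) 1) × Ioi (0:ℝ) =>
          F ((p.2 : ℝ) • (p.1 : En n))) (homeomorphUnitSphereProd (En n) y) ∂((volume : Measure (En n)).comap (Subtype.val : ({0}ᶜ : Set (En n)) → En n)) := by
        refine lintegral_congr fun y => ?_
        have hy : (y : En n) ≠ 0 := y.2
        simp [smul_smul, mul_inv_cancel₀ (norm_ne_zero_iff.2 hy)]
    _ = ∫⁻ p, F ((p.2 : ℝ) • (p.1 : En n))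
          ∂((volume : Measure (En n)).toSphere.prod (Measure.volumeIoiPow (n - 1))) :=
        hmp.lintegral_comp hms
    _ = ∫⁻ v, ∫⁻ r, F ((r : ℝ) • (v : En n)) ∂(Measure.volumeIoiPow (n - 1))
          ∂((volume : Measure (En n)).toSphere) := lintegral_prod _ hms.aemeasurable
    _ = _ := by
        refine lintegral_congr fun v => ?_
        rw [Measure.volumeIoiPow, lintegral_withDensity_eq_lintegral_mul]
        · simp only [Pi.mul_apply]
          exact lintegral_subtype_comap measurableSet_Ioi
            (fun r : ℝ => ENNReal.ofReal (r ^ (n - 1)) * F (r • (v : En n)))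
        · fun_prop
        · exact hF.comp (by fun_prop)

lemma radial_lintegral {n : ℕ} (hn : 2 ≤ n) {q : ℝ} (hq2 : q < n) {p : ℝ} (hp : 0 < p) {c : ℝ}
    (hc : 0 < c) :
    ∫⁻ r in Ioc (0:ℝ) p⁻¹, ENNReal.ofReal (r ^ (n - 1)) * ENNReal.ofReal (r ^ (-q) * c)
      = ENNReal.ofReal (c / (n - q)) * ENNReal.ofReal (p ^ (-(n - q))) := by
  have hs : 0 < n - q := by linarith
  have e : ∀ r ∈ Ioc (0:ℝ) p⁻¹, ENNReal.ofReal (r ^ (n - 1)) * ENNReal.ofReal (r ^ (-q) * c)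
      = ENNReal.ofReal (c * r ^ ((n:ℝ) - q - 1)) := by
    intro r hr
    rw [← ENNReal.ofReal_mul (pow_nonneg hr.1.le _)]
    congr 1
    rw [← Real.rpow_natCast, Nat.cast_sub (by omega), ← mul_assoc, ← Real.rpow_add hr.1, mul_comm]
    congr 2
    push_cast; ring
  rw [setLIntegral_congr_fun measurableSet_Ioc e]
  have hIntg : IntervalIntegrable (fun r : ℝ => c * r ^ ((n:ℝ) - q - 1)) volume 0 p⁻¹ :=
    (intervalIntegral.intervalIntegrable_rpow' (by linarith)).const_mul c
  rw [← ofReal_integral_eq_lintegral_ofReal hIntg.1]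
  · rw [← intervalIntegral.integral_of_le (inv_pos.2 hp).le, intervalIntegral.integral_const_mul,
      integral_rpow (Or.inl (by linarith)), ← ENNReal.ofReal_mul (by positivity)]
    congr 1
    rw [sub_add_cancel, Real.zero_rpow hs.ne', sub_zero, Real.inv_rpow hp.le, Real.rpow_neg hp.le]
    ring
  · refine (ae_restrict_iff' measurableSet_Ioc).2 (ae_of_all _ fun r hr => ?_)
    have := Real.rpow_nonneg hr.1.le ((n:ℝ) - q - 1)
    simp only [Pi.zero_apply]; positivity

variable {n : ℕ} {C : Set (En n)} {ϖ : Set (En n)}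

/-- the cut-off weight -/
def thP (C : Set (En n)) (Θ : En n → ℝ) : En n → ℝ := (interior C \ {0}).indicator Θ

lemma thP_meas {q : ℝ} {Θ : En n → ℝ} (hΘ : IsThetaWeight n C q Θ) : Measurable (thP C Θ) := by
  classical
  rw [thP, ← piecewise_eq_indicator]
  refine ContinuousOn.measurable_piecewise (hΘ.1.mono ?_) continuousOn_const ?_
  · exact sdiff_subset_sdiff_left interior_subset
  · exact isOpen_interior.measurableSet.diff (measurableSet_singleton _)

/-- the reference measure on the sphere -/
def sg (C : Set (En n)) (Θ : En n → ℝ) (s : ℝ) : Measure (Metric.sphere (0 : En n) 1) :=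
  (volume : Measure (En n)).toSphere.withDensity (fun v => ENNReal.ofReal (thP C Θ v / s))

lemma sphere_ne (v : Metric.sphere (0 : En n) 1) : (v : En n) ≠ 0 := by
  have := v.2
  intro h
  rw [h] at this
  simp at this

lemma sg_finite (hC : IsGoodCone n C) {q : ℝ} {Θ : En n → ℝ} (hΘ : IsThetaWeight n C q Θ) {s : ℝ}
    (hs : 0 < s) : IsFiniteMeasure (sg C Θ s) := by
  have hk : IsCompact (Metric.sphere (0 : En n) 1 ∩ C) := (isCompact_sphere 0 1).inter_right hC.1
  have hsub : Metric.sphere (0 : En n) 1 ∩ C ⊆ C \ {0} := fun v hv => ⟨hv.2, sphere_ne ⟨v, hv.1⟩⟩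
  obtain ⟨M, hM⟩ := (hk.image_of_continuousOn (hΘ.1.mono hsub)).isBounded.exists_norm_le
  refine isFiniteMeasure_withDensity_ofReal ?_
  refine HasFiniteIntegral.of_bounded (C := max M 0 / s) (ae_of_all _ fun v => ?_)
  rw [norm_div, Real.norm_of_nonneg hs.le]
  gcongr
  by_cases hv : (v : En n) ∈ interior C \ {0}
  · rw [thP, indicator_of_mem hv]
    exact (hM _ ⟨v, ⟨v.2, interior_subset hv.1⟩, rfl⟩).trans (le_max_left _ _)
  · rw [thP, indicator_of_notMem hv]; simp

lemma sg_ne_zero (hn : 2 ≤ n) (hC : IsGoodCone n C) {q : ℝ} {Θ : En n → ℝ}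
    (hΘ : IsThetaWeight n C q Θ) {s : ℝ} (hs : 0 < s) : sg C Θ s ≠ 0 := by
  intro h
  have hm : Measurable fun v : Metric.sphere (0 : En n) 1 => ENNReal.ofReal (thP C Θ v / s) :=
    (((thP_meas hΘ).comp measurable_subtype_coe).div_const s).ennreal_ofReal
  have h2 : sg C Θ s univ = 0 := by rw [h]; simp
  rw [sg, withDensity_apply_eq_zero hm, inter_univ] at h2
  have hop : IsOpen {v : Metric.sphere (0 : En n) 1 | (v : En n) ∈ interior C} :=
    isOpen_interior.preimage continuous_subtype_val
  obtain ⟨x, hx, hx0⟩ := exists_int_ne hn hC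
  have hne : {v : Metric.sphere (0 : En n) 1 | (v : En n) ∈ interior C}.Nonempty := by
    have hxn := norm_pos_iff.2 hx0
    refine ⟨⟨‖x‖⁻¹ • x, ?_⟩, int_smul hC hx (inv_pos.2 hxn)⟩
    simp [norm_smul, inv_mul_cancel₀ hxn.ne']
  refine (hop.measure_pos (volume : Measure (En n)).toSphere hne).ne' (measure_mono_null ?_ h2)
  intro v hv
  have hv' : (v : En n) ∈ interior C \ {0} := ⟨hv, sphere_ne v⟩
  simp only [mem_ofPred_eq, thP, indicator_of_mem hv', ne_eq, ENNReal.ofReal_eq_zero, not_le]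
  exact div_pos (hΘ.2.1 _ ⟨interior_subset hv'.1, hv'.2⟩) hs

lemma sg_ae (hC : IsGoodCone n C) {q : ℝ} {Θ : En n → ℝ}
    (hΘ : IsThetaWeight n C q Θ) (s : ℝ) : ∀ᵐ v : Metric.sphere (0 : En n) 1 ∂(sg C Θ s), (v : En n) ∈ interior C := by
  have hm : Measurable fun v : Metric.sphere (0 : En n) 1 => ENNReal.ofReal (thP C Θ v / s) :=
    (((thP_meas hΘ).comp measurable_subtype_coe).div_const s).ennreal_ofReal
  rw [sg, ae_withDensity_iff hm]
  refine ae_of_all _ fun v hv => ?_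
  by_contra hcon
  refine hv ?_
  rw [thP, indicator_of_notMem (fun h => hcon h.1)]; simp

variable [CompactSpace ϖ] [Nonempty ϖ] (f : ϖ →ᵇ ℝ)

lemma sphere_diff (h1 : ∀ u ∈ ϖ, ‖u‖ = 1) :
    ∀ᵐ v : Metric.sphere (0 : En n) 1 ∂((volume : Measure (En n)).toSphere), DifferentiableAt ℝ (pF ϖ f) (v : En n) := by
  have hdiff := (pF_lip f h1).ae_differentiableAt (μ := volume)
  rw [ae_iff] at hdiff ⊢
  have hm : MeasurableSet {v : Metric.sphere (0 : En n) 1 | ¬ DifferentiableAt ℝ (pF ϖ f) (v : En n)} :=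
    (measurableSet_of_differentiableAt ℝ (pF ϖ f)).compl.preimage measurable_subtype_coe
  rw [Measure.toSphere_apply' _ hm]
  refine mul_eq_zero_of_right _ (measure_mono_null ?_ hdiff)
  rintro _ ⟨t, ht, _, ⟨v, hv, rfl⟩, rfl⟩ hcon
  refine hv ?_
  have := pF_diff_smul f (inv_pos.2 ht.1) hcon
  simp only [smul_smul, inv_mul_cancel₀ ht.1.ne', one_smul] at this
  exact this

lemma coneVol_eq (hn : 2 ≤ n) (hC : IsGoodCone n C) (hϖsub : ϖ ⊆ omegaDual n C)
    {q : ℝ} (hq2 : q < n) {Θ : En n → ℝ} (hΘ : IsThetaWeight n C q Θ)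
    {ω : Set (En n)} (hω : MeasurableSet ω) :
    coneVol n Θ (Kf C ϖ f) ω = ∫⁻ v in {v : Metric.sphere (0 : En n) 1 | nrm ϖ f v ∈ ω},
      ENNReal.ofReal (pF ϖ f v ^ (-(n - q))) ∂(sg C Θ (n - q)) := by
  have h1 : ∀ u ∈ ϖ, ‖u‖ = 1 := fun u hu => by simpa using (hϖsub hu).1
  have hcont : Continuous (pF ϖ f) := (pF_lip f h1).continuous
  have hT := Tset_meas f hϖsub hω
  have hac : HTheta n Θ ≪ volume := withDensity_absolutelyContinuous _ _
  have hm : Measurable fun v : Metric.sphere (0 : En n) 1 => ENNReal.ofReal (thP C Θ v / (n - q)) :=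
    (((thP_meas hΘ).comp measurable_subtype_coe).div_const _).ennreal_ofReal
  have hW : MeasurableSet {v : Metric.sphere (0 : En n) 1 | nrm ϖ f v ∈ ω} :=
    ((nrm_measurable f).comp measurable_subtype_coe) hω
  have hpm : Measurable fun v : Metric.sphere (0 : En n) 1 =>
      ENNReal.ofReal (pF ϖ f v ^ (-((n:ℝ) - q))) :=
    ((hcont.measurable.comp measurable_subtype_coe).pow_const _).ennreal_ofReal
  rw [coneVol, measure_congr (hac.ae_eq (segs_ae_eq f hC hϖsub ω hn)), HTheta,
    withDensity_apply _ hT]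
  have e1 : ∫⁻ y in Tset C ϖ f ω, ENNReal.ofReal (Θ y) =
      ∫⁻ y, (Tset C ϖ f ω).indicator (fun y => ENNReal.ofReal (thP C Θ y)) y := by
    rw [lintegral_indicator hT]
    refine setLIntegral_congr_fun hT fun y hy => ?_
    have hy' : y ∈ interior C \ {0} := ⟨hy.1, hy.2.1⟩
    simp only [thP, indicator_of_mem hy']
  rw [e1, polar_lintegral n _ ((thP_meas hΘ).ennreal_ofReal.indicator hT) hn,
    ← lintegral_indicator hW, sg, lintegral_withDensity_eq_lintegral_mul _ hm (hpm.indicator hW)]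
  refine lintegral_congr fun v => ?_
  simp only [Pi.mul_apply]
  have hv0 := sphere_ne v
  have hv1 : ‖(v : En n)‖ = 1 := by simpa using v.2
  have hmem : ∀ r : ℝ, 0 < r → (r • (v : En n) ∈ Tset C ϖ f ω ↔
      (v : En n) ∈ interior C ∧ r * pF ϖ f v ≤ 1 ∧ nrm ϖ f v ∈ ω) := by
    intro r hr
    have hi : r • (v : En n) ∈ interior C ↔ (v : En n) ∈ interior C := by
      refine ⟨fun h => ?_, fun h => int_smul hC h hr⟩
      have := int_smul hC h (inv_pos.2 hr)
      rwa [smul_smul, inv_mul_cancel₀ hr.ne', one_smul] at this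
    have hnm : ‖r • (v : En n)‖⁻¹ • (r • (v : En n)) = v := by
      rw [norm_smul, hv1, mul_one, Real.norm_of_nonneg hr.le, smul_smul, inv_mul_cancel₀ hr.ne',
        one_smul]
    change (_ ∧ _ ∧ _ ∧ _) ↔ _
    rw [hnm, hi, pF_smul f hr]
    simp [hr.ne', hv0]
  by_cases hvC : (v : En n) ∈ interior C
  swap
  · have hz : thP C Θ v = 0 := by rw [thP, indicator_of_notMem (fun h => hvC h.1)]
    rw [hz]
    simp only [zero_div, ENNReal.ofReal_zero, zero_mul]
    rw [setLIntegral_congr_fun measurableSet_Ioi (g := fun _ => 0), lintegral_zero]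
    intro r hr
    have : r • (v : En n) ∉ Tset C ϖ f ω := fun h => hvC ((hmem r hr).1 h).1
    simp [indicator_of_notMem this]
  by_cases hvω : nrm ϖ f v ∈ ω
  swap
  · rw [indicator_of_notMem (show v ∉ {v : Metric.sphere (0 : En n) 1 | nrm ϖ f v ∈ ω} from hvω),
      mul_zero]
    rw [setLIntegral_congr_fun measurableSet_Ioi (g := fun _ => 0), lintegral_zero]
    intro r hr
    have : r • (v : En n) ∉ Tset C ϖ f ω := fun h => hvω ((hmem r hr).1 h).2.2
    simp [indicator_of_notMem this]
  rw [indicator_of_mem (show v ∈ {v : Metric.sphere (0 : En n) 1 | nrm ϖ f v ∈ ω} from hvω)]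
  have hvC' : (v : En n) ∈ C \ {0} := ⟨interior_subset hvC, hv0⟩
  have hp := pF_pos f hϖsub hvC'.1 hv0
  have hvI : (v : En n) ∈ interior C \ {0} := ⟨hvC, hv0⟩
  have ht : thP C Θ v = Θ v := by rw [thP, indicator_of_mem hvI]
  rw [ht, ← radial_lintegral hn hq2 hp (hΘ.2.1 _ hvC')]
  rw [← inter_eq_left.2 (Ioc_subset_Ioi_self : Ioc (0:ℝ) (pF ϖ f v)⁻¹ ⊆ Ioi 0),
    ← setLIntegral_indicator measurableSet_Ioc]
  refine setLIntegral_congr_fun measurableSet_Ioi fun r hr => ?_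
  have hr : 0 < r := hr
  by_cases hrp : r * pF ϖ f v ≤ 1
  · have hrT : r • (v : En n) ∈ Tset C ϖ f ω := (hmem r hr).2 ⟨hvC, hrp, hvω⟩
    have hrI : r ∈ Ioc (0:ℝ) (pF ϖ f v)⁻¹ := ⟨hr, by rwa [le_inv_comm₀ hr hp, ← one_div, le_div_iff₀ hr, mul_comm]⟩
    simp only [indicator_of_mem hrT, indicator_of_mem hrI]
    have hrI2 : r • (v : En n) ∈ interior C \ {0} := ⟨hrT.1, hrT.2.1⟩
    rw [thP, indicator_of_mem hrI2, hΘ.2.2 _ hvC' r hr]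
  · have hrT : r • (v : En n) ∉ Tset C ϖ f ω := fun h => hrp ((hmem r hr).1 h).2.1
    have hrI : r ∉ Ioc (0:ℝ) (pF ϖ f v)⁻¹ := fun h => hrp (by
      have := h.2
      rwa [le_inv_comm₀ hr hp, ← one_div, le_div_iff₀ hr, mul_comm] at this)
    simp [indicator_of_notMem hrT, indicator_of_notMem hrI]

/-- the logarithmic cost -/
def lcost (ϖ : Set (En n)) (m : ℝ) (u : ϖ) (v : Metric.sphere (0 : En n) 1) : ℝ :=
  Real.log (max (-⟪(v : En n), (u : En n)⟫) m)

lemma lcost_cont {m : ℝ} (hm : 0 < m) : Continuous (Function.uncurry (lcost ϖ m)) := by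
  refine Continuous.log ?_ fun p => (lt_max_of_lt_right hm).ne'
  fun_prop

lemma lcost_lip {m : ℝ} (hm : 0 < m) (v : Metric.sphere (0 : En n) 1) :
    LipschitzWith m⁻¹.toNNReal (fun u => lcost ϖ m u v) := by
  have hv1 : ‖(v : En n)‖ = 1 := by simpa using v.2
  refine LipschitzWith.of_le_add_mul _ fun u w => ?_
  rw [Real.coe_toNNReal _ (inv_pos.2 hm).le]
  set a := max (-⟪(v : En n), (u : En n)⟫) m with ha
  set b := max (-⟪(v : En n), (w : En n)⟫) m with hb
  have ham : m ≤ a := le_max_right _ _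
  have hbm : m ≤ b := le_max_right _ _
  have hab : a ≤ b + dist u w := by
    refine max_le ?_ (by have : 0 ≤ dist u w := dist_nonneg; linarith)
    have h1 : -⟪(v : En n), (w : En n)⟫ ≤ b := le_max_left _ _
    have h2 : ⟪(v : En n), (w : En n) - u⟫ ≤ dist u w := by
      refine (real_inner_le_norm _ _).trans ?_
      rw [hv1, one_mul, Subtype.dist_eq, dist_comm, dist_eq_norm]
    rw [inner_sub_right] at h2
    linarith
  have hb0 : 0 < b := hm.trans_le hbm
  have ha0 : 0 < a := hm.trans_le ham
  change Real.log a ≤ Real.log b + _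
  have h3 := Real.log_le_sub_one_of_pos (div_pos ha0 hb0)
  rw [Real.log_div ha0.ne' hb0.ne'] at h3
  have h4 : a / b - 1 ≤ m⁻¹ * dist u w := by
    have : a / b - 1 = (a - b) / b := by field_simp
    rw [this]
    have h5 : (a - b) / b ≤ dist u w / b := by gcongr; linarith
    refine h5.trans ?_
    rw [inv_mul_eq_div]
    gcongr
  linarith

/-- comparison between the transform and the gauge -/
lemma cTr_eq (hϖsub : ϖ ⊆ omegaDual n C) {m : ℝ} (hm : 0 < m)
    (hmb : ∀ u ∈ ϖ, ∀ v ∈ C, ‖v‖ = 1 → m ≤ -⟪v, u⟫) (v : Metric.sphere (0 : En n) 1)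
    (hv : (v : En n) ∈ C) :
    cTr (lcost ϖ m) f v = -Real.log (pF ϖ f v) ∧
    ∀ u : ϖ, f u - lcost ϖ m u v = cTr (lcost ϖ m) f v →
      pF ϖ f v = Real.exp (-f u) * (-⟪(v : En n), (u : En n)⟫) := by
  have hv1 : ‖(v : En n)‖ = 1 := by simpa using v.2
  have hp := pF_pos f hϖsub hv (sphere_ne v)
  have key : ∀ u : ϖ, f u - lcost ϖ m u v = -Real.log (Real.exp (-f u) * (-⟪(v : En n), (u : En n)⟫)) := by
    intro u
    have h1 := hmb u u.2 v hv hv1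
    rw [lcost, max_eq_left h1, Real.log_mul (Real.exp_pos _).ne' (by linarith), Real.log_exp]
    ring
  have heq : cTr (lcost ϖ m) f v = -Real.log (pF ϖ f v) := by
    apply le_antisymm
    · refine ciSup_le fun u => ?_
      rw [key u, neg_le_neg_iff]
      exact Real.log_le_log hp (pF_le f v u)
    · obtain ⟨u, hu⟩ := exists_pF f v
      rw [hu, ← key u]
      exact le_cTr (lcost_cont hm) f v u
  refine ⟨heq, fun u hu => ?_⟩
  rw [heq, key u, neg_inj] at hu
  have h1 := hmb u u.2 v hv hv1
  refine (Real.log_injOn_pos ?_ hp hu).symm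
  exact mul_pos (Real.exp_pos _) (by linarith)

end PartC

/-- Every nonzero finite Borel measure on `Ω_{C°}` with support in a
nonempty compact set `ϖ ⊆ Ω_{C°}` is the `Θ`-weighted cone-volume measure of some
`K ∈ K(C,ϖ)`. -/
theorem statement12 (n : ℕ) (hn : 2 ≤ n) (C : Set (En n)) (hC : IsGoodCone n C)
    (q : ℝ) (hq1 : (n : ℝ) - 1 < q) (hq2 : q < n)
    (Θ : En n → ℝ) (hΘ : IsThetaWeight n C q Θ)
    (ϖ : Set (En n)) (hϖne : ϖ.Nonempty) (hϖc : IsCompact ϖ) (hϖsub : ϖ ⊆ omegaDual n C)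
    (φ : Measure (En n)) (hfin : IsFiniteMeasure φ) (hnz : φ ≠ 0) (hsupp : φ ϖᶜ = 0) :
    ∃ K : Set (En n), CDetermined n C ϖ K ∧ RepsConeVol n C Θ K φ := by
  have hs : 0 < (n:ℝ) - q := by linarith
  have h1 : ∀ u ∈ ϖ, ‖u‖ = 1 := fun u hu => by simpa using (hϖsub hu).1
  have : CompactSpace ϖ := isCompact_iff_compactSpace.1 hϖc
  have : Nonempty ϖ := hϖne.to_subtype
  have hϖm : MeasurableSet ϖ := hϖc.isClosed.measurableSet
  obtain ⟨m, hm, hmb⟩ := lower_bound hC hϖc hϖsub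
  have hσf := sg_finite hC hΘ hs
  have hσ0 := sg_ne_zero hn hC hΘ hs
  have hφr : φ.restrict ϖ = φ := Measure.restrict_eq_self_of_ae_mem (by rwa [ae_iff])
  have hmap : (φ.comap (Subtype.val : ϖ → En n)).map Subtype.val = φ := by
    rw [map_comap_subtype_coe hϖm, hφr]
  have hφ'0 : φ.comap (Subtype.val : ϖ → En n) ≠ 0 := by
    intro h
    rw [h, Measure.map_zero] at hmap
    exact hnz hmap.symm
  have hφ'f : IsFiniteMeasure (φ.comap (Subtype.val : ϖ → En n)) := by
    refine ⟨?_⟩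
    rw [(MeasurableEmbedding.subtype_coe hϖm).comap_apply]
    exact measure_lt_top _ _
  obtain ⟨f, hf⟩ := abstract_main (lcost_cont (ϖ := ϖ) hm) _ (lcost_lip hm) hσ0 hs
    (φ.comap (Subtype.val : ϖ → En n)) hφ'0
  refine ⟨Kf C ϖ f, Kf_det f hn hC hϖsub, ?_, ?_⟩
  · exact measure_mono_null (compl_subset_compl.2 hϖsub) hsupp
  have hl := lcost_cont (ϖ := ϖ) hm
  have hIntg := sg_ae hC hΘ ((n:ℝ) - q)
  have hdf : ∀ᵐ v : Metric.sphere (0 : En n) 1 ∂(sg C Θ ((n:ℝ) - q)), DifferentiableAt ℝ (pF ϖ f) (v : En n) :=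
    (withDensity_absolutelyContinuous _ _).ae_le (sphere_diff f h1)
  choose a ha using exists_cTr hl f
  have han : ∀ᵐ v : Metric.sphere (0 : En n) 1 ∂(sg C Θ ((n:ℝ) - q)), nrm ϖ f v = a v := by
    filter_upwards [hIntg, hdf] with v hv hd
    exact nrm_eq f h1 hd ((cTr_eq f hϖsub hm hmb v (interior_subset hv)).2 _ (ha v).symm)
  have hnm : Measurable fun v : Metric.sphere (0 : En n) 1 => nrm ϖ f v :=
    (nrm_measurable f).comp measurable_subtype_coe
  have ham : AEMeasurable a (sg C Θ ((n:ℝ) - q)) := by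
    rw [← (MeasurableEmbedding.subtype_coe hϖm).aemeasurable_comp_iff]
    exact hnm.aemeasurable.congr han
  have hkey := hf a ham (by
    filter_upwards [hIntg, hdf] with v hv hd u hu
    have e1 := nrm_eq f h1 hd ((cTr_eq f hϖsub hm hmb v (interior_subset hv)).2 _ hu)
    have e2 := nrm_eq f h1 hd ((cTr_eq f hϖsub hm hmb v (interior_subset hv)).2 _ (ha v).symm)
    exact Subtype.ext (e1.symm.trans e2))
  have hdm : Measurable fun v : Metric.sphere (0 : En n) 1 =>
      ENNReal.ofReal (Real.exp (((n:ℝ) - q) * cTr (lcost ϖ m) f v)) :=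
    ((measurable_const.mul (cTr_continuous hl f).measurable).exp).ennreal_ofReal
  have hfin2 := isFiniteMeasure_withDensity_ofReal
    (cV_integrable hl (sg C Θ ((n:ℝ) - q)) ((n:ℝ) - q) f).2
  set ν := (sg C Θ ((n:ℝ) - q)).withDensity (fun v : Metric.sphere (0 : En n) 1 =>
      ENNReal.ofReal (Real.exp (((n:ℝ) - q) * cTr (lcost ϖ m) f v))) with hν
  have hmeas : φ = ν.map (fun v : Metric.sphere (0 : En n) 1 => nrm ϖ f v) := by
    have : IsFiniteMeasure (ν.map (fun v : Metric.sphere (0 : En n) 1 => nrm ϖ f v)) :=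
      Measure.isFiniteMeasure_map _ _
    refine ext_of_forall_integral_eq_of_IsFiniteMeasure fun h => ?_
    have e1 := hkey (h.compContinuous ⟨Subtype.val, continuous_subtype_val⟩)
    rw [integral_map hnm.aemeasurable h.continuous.aestronglyMeasurable, hν,
      integral_withDensity_eq_integral_toReal_smul hdm (ae_of_all _ fun _ => ENNReal.ofReal_lt_top)]
    have e2 : ∫ x, h x ∂φ = ∫ x : ϖ, h x ∂(φ.comap (Subtype.val : ϖ → En n)) := by
      rw [integral_subtype_comap hϖm (fun x => h x), hφr]
    rw [e2]
    refine Eq.trans e1 (integral_congr_ae ?_)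
    filter_upwards [han] with v hv
    rw [ENNReal.toReal_ofReal (Real.exp_pos _).le, hv]
    rfl
  intro ω hω _
  rw [coneVol_eq f hn hC hϖsub hq2 hΘ hω]
  conv_lhs => rw [hmeas]
  rw [Measure.map_apply hnm hω, hν, withDensity_apply _ (hnm hω)]
  refine lintegral_congr_ae (ae_restrict_of_ae ?_)
  filter_upwards [hIntg] with v hv
  have hp := pF_pos f hϖsub (interior_subset hv) (sphere_ne v)
  rw [(cTr_eq f hϖsub hm hmb v (interior_subset hv)).1, Real.rpow_def_of_pos hp]
  ring_nf
end
end

section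
/- Let K ∈ ps(C), let ϖ ⊂ Ω_{C°} be nonempty and compact, and define K^{(ϖ)} = C ∩ ⋂_{u∈ϖ} H^-(u, h_K(u)), which belongs to K(C,ϖ). Then for every compact set ω ⊂ int ϖ (interior relative to Ω_{C°}), one has ν_{K^{(ϖ)}}^{-1}(ω) = ν_K^{-1}(ω). -/
open MeasureTheory Set Filter
open scoped RealInnerProductSpace ENNReal Topology Pointwise NNReal

noncomputable section

lemma aux_strict (n : ℕ) (C : Set (En n)) (u : En n) (hu : u ∈ interior (dualCone n C)) :
    ∃ c > (0 : ℝ), ∀ y ∈ C, ⟪y, u⟫ ≤ -(c * ‖y‖) := by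
  rw [mem_interior_iff_mem_nhds, Metric.mem_nhds_iff] at hu
  obtain ⟨r, hr, hb⟩ := hu
  refine ⟨r / 2, by positivity, fun y hy => ?_⟩
  by_cases h0 : y = 0
  · simp [h0]
  have hny : 0 < ‖y‖ := norm_pos_iff.mpr h0
  have hmem : u + (r / 2 / ‖y‖) • y ∈ Metric.ball u r := by
    rw [Metric.mem_ball, dist_eq_norm, add_sub_cancel_left, norm_smul, Real.norm_of_nonneg (by positivity),
      div_mul_cancel₀ _ hny.ne']
    linarith
  have h := hb hmem y hy
  rw [inner_add_left, real_inner_smul_left, real_inner_self_eq_norm_sq, real_inner_comm] at h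
  have : r / 2 / ‖y‖ * ‖y‖ ^ 2 = r / 2 * ‖y‖ := by field_simp
  linarith

lemma aux_sub (n : ℕ) (C K : Set (En n)) (hK : IsCPseudoCone n C K) : K ⊆ C := by
  obtain ⟨⟨hne, hcl, hconv, h0, hl⟩, hrec⟩ := hK
  intro x hx
  rw [← hrec]
  intro y hy t ht
  rcases ht.eq_or_lt with h | ht
  · simpa [← h] using hy
  have hlim : Tendsto (fun s : ℝ => (1 - s) • y + t • x) (𝓝[>] 0) (𝓝 (y + t • x)) := by
    have : Continuous (fun s : ℝ => (1 - s) • y + t • x) := by fun_prop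
    have h := (this.tendsto 0).mono_left (nhdsWithin_le_nhds (s := Ioi 0))
    simpa using h
  refine hcl.mem_of_tendsto hlim ?_
  have e1 : ∀ᶠ s : ℝ in 𝓝[>] 0, s < min 1 t :=
    nhdsWithin_le_nhds (Iio_mem_nhds (lt_min one_pos ht))
  filter_upwards [e1, self_mem_nhdsWithin] with s hs hs0
  have hs0 : 0 < s := hs0
  have h1 : s < 1 := hs.trans_le (min_le_left _ _)
  have h2 : s < t := hs.trans_le (min_le_right _ _)
  have hm : (t / s) • x ∈ K :=
    hl (t / s) (by rw [le_div_iff₀ hs0]; linarith) (Set.smul_mem_smul_set hx)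
  have := hconv hy hm (by linarith : (0:ℝ) ≤ 1 - s) hs0.le (by ring)
  rwa [smul_smul, mul_div_cancel₀ _ hs0.ne'] at this

lemma aux_frontier (n : ℕ) (K : Set (En n)) (x u : En n) (hx : x ∈ K)
    (hu : u ∈ normalsAt n K x) : x ∈ frontier K := by
  refine ⟨subset_closure hx, fun hi => ?_⟩
  rw [mem_interior_iff_mem_nhds, Metric.mem_nhds_iff] at hi
  obtain ⟨r, hr, hb⟩ := hi
  have hmem : x + (r / 2) • u ∈ Metric.ball x r := by
    rw [Metric.mem_ball, dist_eq_norm, add_sub_cancel_left, norm_smul,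
      Real.norm_of_nonneg (by positivity), hu.1]
    linarith
  have h := hu.2 _ (hb hmem)
  rw [inner_add_left, real_inner_smul_left, real_inner_self_eq_norm_sq, hu.1] at h
  linarith

lemma aux_near (n : ℕ) (C ϖ : Set (En n)) (u v : En n) (hu : u ∈ omegaDual n C)
    (h : ∃ ε > (0 : ℝ), Metric.ball u ε ∩ omegaDual n C ⊆ ϖ) :
    ∃ t > (0 : ℝ), 0 < ‖u + t • v‖ ∧ (‖u + t • v‖⁻¹) • (u + t • v) ∈ ϖ := by
  obtain ⟨ε, hε, hsub⟩ := h
  have hn : ‖u‖ = 1 := by simpa using hu.1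
  have c0 : ContinuousAt (fun t : ℝ => u + t • v) 0 := by fun_prop
  have c1 : ContinuousAt (fun t : ℝ => ‖u + t • v‖) 0 := by fun_prop
  have c2 : ContinuousAt (fun t : ℝ => (‖u + t • v‖⁻¹) • (u + t • v)) 0 :=
    (c1.inv₀ (by simp [hn])).smul c0
  have t1 : Tendsto (fun t : ℝ => ‖u + t • v‖) (𝓝 0) (𝓝 1) := by
    simpa [ContinuousAt, hn] using c1
  have t2 : Tendsto (fun t : ℝ => (‖u + t • v‖⁻¹) • (u + t • v)) (𝓝 0) (𝓝 u) := by
    simpa [ContinuousAt, hn] using c2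
  have e : ∀ᶠ t : ℝ in 𝓝[>] 0, 0 < ‖u + t • v‖ ∧
      (‖u + t • v‖⁻¹) • (u + t • v) ∈ interior (dualCone n C) ∧
      (‖u + t • v‖⁻¹) • (u + t • v) ∈ Metric.ball u ε :=
    nhdsWithin_le_nhds ((t1.eventually (lt_mem_nhds one_pos)).and
      ((t2.eventually (isOpen_interior.mem_nhds hu.2)).and
        (t2.eventually (Metric.ball_mem_nhds u hε))))
  obtain ⟨t, ⟨h1, h2, h3⟩, ht⟩ := (e.and self_mem_nhdsWithin).exists
  refine ⟨t, ht, h1, hsub ⟨h3, ?_, h2⟩⟩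
  rw [mem_sphere_zero_iff_norm, norm_smul, norm_inv, norm_norm, inv_mul_cancel₀ h1.ne']

/-- For `K ∈ ps(C)` and nonempty compact `ϖ ⊆ Ω_{C°}`, the set
`K^{(ϖ)} = C ∩ ⋂_{u∈ϖ} H^-(u,h_K(u))` belongs to `K(C,ϖ)`, and for every compact set `ω`
contained in the interior of `ϖ` relative to `Ω_{C°}`, `ν_{K^{(ϖ)}}^{-1}(ω) = ν_K^{-1}(ω)`. -/
theorem statement17 (n : ℕ) (hn : 2 ≤ n) (C : Set (En n)) (hC : IsGoodCone n C)
    (K : Set (En n)) (hK : IsCPseudoCone n C K)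
    (ϖ : Set (En n)) (hϖne : ϖ.Nonempty) (hϖc : IsCompact ϖ) (hϖsub : ϖ ⊆ omegaDual n C) :
    CDetermined n C ϖ (C ∩ ⋂ u ∈ ϖ, {x | ⟪x, u⟫ ≤ suppFn n K u}) ∧
    ∀ ω : Set (En n), IsCompact ω →
      (∀ u ∈ ω, u ∈ ϖ ∧ ∃ ε > (0 : ℝ), Metric.ball u ε ∩ omegaDual n C ⊆ ϖ) →
      nuInv n (C ∩ ⋂ u ∈ ϖ, {x | ⟪x, u⟫ ≤ suppFn n K u}) ω = nuInv n K ω := by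
  have hKC := aux_sub n C K hK
  obtain ⟨⟨hne, hcl, hconv, h0, hl⟩, hrec⟩ := hK
  obtain ⟨hCcl, hCconv, hCsm, hCp, hCi⟩ := hC
  have hCadd : ∀ x ∈ C, ∀ y ∈ C, x + y ∈ C := by
    intro x hx y hy
    have := hCsm _ (hCconv hx hy (by norm_num : (0:ℝ) ≤ 1/2) (by norm_num : (0:ℝ) ≤ 1/2)
      (by norm_num)) 2 (by norm_num)
    simpa [smul_add, smul_smul] using this
  have hCu : ∀ u ∈ ϖ, ∀ y ∈ C, ⟪y, u⟫ ≤ 0 := by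
    intro u hu y hy
    rw [real_inner_comm]
    exact interior_subset (hϖsub hu).2 y hy
  have hle : ∀ u ∈ ϖ, ∀ y ∈ K, ⟪y, u⟫ ≤ suppFn n K u := by
    intro u hu y hy
    exact le_csSup ⟨0, by rintro _ ⟨z, hz, rfl⟩; exact hCu u hu z (hKC hz)⟩ ⟨y, hy, rfl⟩
  have hsup : ∀ u B, (∀ y ∈ K, ⟪y, u⟫ ≤ B) → suppFn n K u ≤ B := by
    intro u B hB
    exact csSup_le (hne.image _) (by rintro _ ⟨z, hz, rfl⟩; exact hB z hz)
  have hneg : ∀ u ∈ ϖ, suppFn n K u < 0 := by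
    intro u hu
    obtain ⟨c, hc, hcy⟩ := aux_strict n C u (hϖsub hu).2
    obtain ⟨r, hr, hb⟩ := Metric.mem_nhds_iff.mp (hcl.isOpen_compl.mem_nhds h0)
    have : suppFn n K u ≤ -(c * r) := by
      refine hsup u _ fun y hy => (hcy y (hKC hy)).trans ?_
      have : r ≤ ‖y‖ := by
        by_contra hlt
        exact hb (by simpa using not_le.mp hlt) hy
      nlinarith
    nlinarith [mul_pos hc hr]
  set L := C ∩ ⋂ u ∈ ϖ, {x | ⟪x, u⟫ ≤ suppFn n K u} with hL
  have memL : ∀ x, x ∈ L ↔ x ∈ C ∧ ∀ u ∈ ϖ, ⟪x, u⟫ ≤ suppFn n K u := by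
    intro x; simp [hL]
  have hKL : K ⊆ L := fun x hx => (memL x).2 ⟨hKC hx, fun u hu => hle u hu x hx⟩
  have hLcl : IsClosed L := by
    refine hCcl.inter (isClosed_biInter fun u _ => ?_)
    exact isClosed_le (by fun_prop) continuous_const
  refine ⟨⟨⟨⟨hne.mono hKL, hLcl, ?_, ?_, ?_⟩, ?_⟩, ?_⟩, ?_⟩
  · refine hCconv.inter (convex_iInter₂ fun u _ => ?_)
    intro x hx y hy a b ha hb hab
    simp only [mem_setOf_eq] at *
    rw [inner_add_left, real_inner_smul_left, real_inner_smul_left]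
    calc a * ⟪x, u⟫ + b * ⟪y, u⟫ ≤ a * suppFn n K u + b * suppFn n K u := by gcongr
      _ = suppFn n K u := by rw [← add_mul, hab, one_mul]
  · intro h
    obtain ⟨u, hu⟩ := hϖne
    have := ((memL 0).1 h).2 u hu
    rw [inner_zero_left] at this
    linarith [hneg u hu]
  · rintro l hl1 _ ⟨x, hx, rfl⟩
    have hx := (memL x).1 hx
    refine (memL _).2 ⟨hCsm x hx.1 l (by linarith), fun u hu => ?_⟩
    have h1 := hx.2 u hu
    have h2 := hCu u hu x hx.1
    simp only [real_inner_smul_left]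
    nlinarith
  · ext z
    constructor
    · intro hz
      obtain ⟨x, hx⟩ := hne.mono hKL
      have hlim : Tendsto (fun s : ℝ => s • x + z) (𝓝[>] 0) (𝓝 z) := by
        have : Continuous (fun s : ℝ => s • x + z) := by fun_prop
        have h := (this.tendsto 0).mono_left (nhdsWithin_le_nhds (s := Ioi 0))
        simpa using h
      refine hCcl.mem_of_tendsto hlim ?_
      filter_upwards [self_mem_nhdsWithin] with s hs
      have hs : 0 < s := hs
      have := hCsm _ (hz x hx s⁻¹ (by positivity)).1 s hs.le
      rwa [smul_add, smul_smul, mul_inv_cancel₀ hs.ne', one_smul] at this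
    · intro hz x hx t ht
      have hx := (memL x).1 hx
      refine (memL _).2 ⟨hCadd x hx.1 _ (hCsm z hz t ht), fun u hu => ?_⟩
      rw [inner_add_left]
      have := hCu u hu _ (hCsm z hz t ht)
      linarith [hx.2 u hu]
  · have heq : ∀ u ∈ ϖ, suppFn n L u = suppFn n K u := by
      intro u hu
      apply le_antisymm
      · exact csSup_le ((hne.mono hKL).image _)
          (by rintro _ ⟨z, hz, rfl⟩; exact ((memL z).1 hz).2 u hu)
      · refine hsup u _ fun y hy => ?_
        exact le_csSup ⟨0, by rintro _ ⟨z, hz, rfl⟩; exact hCu u hu z hz.1⟩ ⟨y, hKL hy, rfl⟩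
    ext x
    rw [memL]
    simp only [mem_inter_iff, mem_iInter, mem_setOf_eq]
    refine and_congr_right fun _ => forall₂_congr fun u hu => ?_
    rw [heq u hu]
  · intro ω _ hω
    have hmono : ∀ x, normalsAt n L x ⊆ normalsAt n K x :=
      fun x u hu => ⟨hu.1, fun y hy => hu.2 y (hKL hy)⟩
    have hKn : ∀ x, ∀ u ∈ ϖ, u ∈ normalsAt n K x → u ∈ normalsAt n L x := by
      intro x u hu hux
      exact ⟨hux.1, fun y hy => (((memL y).1 hy).2 u hu).trans (hsup u _ hux.2)⟩
    ext x
    constructor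
    · rintro ⟨hxf, u, huω, hnu⟩
      have hxL : x ∈ L := hLcl.frontier_subset hxf
      obtain ⟨huϖ, hball⟩ := hω u huω
      have huL : u ∈ normalsAt n L x := by rw [hnu]; rfl
      have huK := hmono x huL
      have hxK : x ∈ K := by
        by_contra hxK
        obtain ⟨f, s, hfs, hsx⟩ := geometric_hahn_banach_closed_point hconv hcl hxK
        set v := (InnerProductSpace.toDual ℝ (En n)).symm f with hv
        have hfv : ∀ y, f y = ⟪y, v⟫ := by
          intro y
          rw [real_inner_comm, hv, InnerProductSpace.toDual_symm_apply]
        obtain ⟨t, ht, hpos, hw⟩ := aux_near n C ϖ u v (hϖsub huϖ) hball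
        have h1 := ((memL x).1 hxL).2 _ hw
        have h2 := hsup (‖u + t • v‖⁻¹ • (u + t • v)) (‖u + t • v‖⁻¹ * (⟪x, u⟫ + t * s)) (by
          intro y hy
          rw [real_inner_smul_right, inner_add_right, real_inner_smul_right]
          have a1 := huK.2 y hy
          have a2 := (hfs y hy).le
          rw [hfv] at a2
          gcongr)
        have h3 := h1.trans h2
        rw [real_inner_smul_right, inner_add_right, real_inner_smul_right] at h3
        have h4 := le_of_mul_le_mul_left h3 (inv_pos.mpr hpos)
        rw [hfv] at hsx
        nlinarith
      refine ⟨aux_frontier n K x u hxK huK, u, huω, ?_⟩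
      refine Subset.antisymm ?_ (by rintro _ rfl; exact huK)
      intro w hw
      obtain ⟨t, ht, hpos, hwϖ⟩ := aux_near n C ϖ u w (hϖsub huϖ) hball
      have hm : ‖u + t • w‖⁻¹ • (u + t • w) ∈ normalsAt n L x := by
        refine hKn x _ hwϖ ⟨?_, fun y hy => ?_⟩
        · rw [norm_smul, norm_inv, norm_norm, inv_mul_cancel₀ hpos.ne']
        · simp only [real_inner_smul_right, inner_add_right]
          have a1 := huK.2 y hy
          have a2 := hw.2 y hy
          gcongr
      rw [hnu, mem_singleton_iff] at hm
      rw [inv_smul_eq_iff₀ hpos.ne'] at hm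
      set r := ‖u + t • w‖ with hr
      have hwc : w = ((r - 1) / t) • u := by
        have h1 : t • w = (r - 1) • u := by
          rw [sub_smul, one_smul, ← hm, add_sub_cancel_left]
        rw [div_eq_inv_mul, mul_smul, ← h1, smul_smul, inv_mul_cancel₀ ht.ne', one_smul]
      have habs : |(r - 1) / t| = 1 := by
        have h1 := hw.1
        rwa [hwc, norm_smul, huK.1, mul_one, Real.norm_eq_abs] at h1
      rcases (abs_eq zero_le_one).1 habs with h1 | h1
      · rw [hwc, h1, one_smul]; rfl
      · exfalso
        rw [h1, neg_one_smul] at hwc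
        have h2 := hw.2 _ (hl 2 (by norm_num) (Set.smul_mem_smul_set hxK))
        rw [hwc, real_inner_smul_left, inner_neg_right] at h2
        have h3 := hle u huϖ x hxK
        have h4 := hneg u huϖ
        linarith
    · rintro ⟨hxf, u, huω, hnu⟩
      have hxK : x ∈ K := hcl.frontier_subset hxf
      obtain ⟨huϖ, -⟩ := hω u huω
      have huL : u ∈ normalsAt n L x := hKn x u huϖ (by rw [hnu]; rfl)
      refine ⟨aux_frontier n L x u (hKL hxK) huL, u, huω, ?_⟩
      refine Subset.antisymm (hnu ▸ hmono x) (by rintro _ rfl; exact huL)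
end
end
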